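/- arXiv:1106.0928 — 5 statements merged into one kernel-verified Lean document; each statement's English description precedes it below -/
import Mathlib

section
/- For any two ℝ-linear connections ∇⁰, ∇¹ of L on E and every p ≥ 1, the difference ch_p(∇¹) − ch_p(∇⁰) is d_ρ-exact: there exists a C-valued ℝ-linear (2p−1)-form η on L with d_ρ η = ch_p(∇¹) − ch_p(∇⁰). Hence the Chern character class [ch_p(∇)] does not depend on the choice of the ℝ-linear connection ∇. -/
open Module

/-- The trace over `C` of an `ℝ`-linear endomorphism of `E` whose underlying
function happens to be `C`-linear (and `0` otherwise). -/
noncomputable def trR (C : Type*) {E : Type*} [CommRing C] [AddCommGroup E]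
    [Module ℝ E] [Module C E] (e : E →ₗ[ℝ] E) : C :=
  letI := Classical.propDecidable
  if h : ∃ g : E →ₗ[C] E, ⇑g = ⇑e then LinearMap.trace C E h.choose else 0

/-- An ℝ-linear connection of the Lie algebra `L` (with anchor `ρ`) on the `C`-module `E`. -/
def IsConn {L C E : Type*} [LieRing L] [LieAlgebra ℝ L] [CommRing C] [Algebra ℝ C]
    [AddCommGroup E] [Module ℝ E] [Module C E]
    (ρ : L →ₗ[ℝ] Derivation ℝ C C) (D : L →ₗ[ℝ] Module.End ℝ E) : Prop :=
  ∀ (a : L) (f : C) (e : E), D a (f • e) = f • D a e + ρ a f • e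

/-- The curvature of an ℝ-linear map `D : L →ₗ[ℝ] End ℝ E`. -/
def curv {L E : Type*} [LieRing L] [LieAlgebra ℝ L] [AddCommGroup E] [Module ℝ E]
    (D : L →ₗ[ℝ] Module.End ℝ E) (a b : L) : Module.End ℝ E :=
  D a * D b - D b * D a - D ⁅a, b⁆

/-- The curvature as an `End ℝ E`-valued 2-form. -/
def curv2 {L E : Type*} [LieRing L] [LieAlgebra ℝ L] [AddCommGroup E] [Module ℝ E]
    (D : L →ₗ[ℝ] Module.End ℝ E) : (Fin 2 → L) → Module.End ℝ E :=
  fun a => curv D (a 0) (a 1)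

/-- The Chevalley–Eilenberg style differential of a `V`-valued `n`-form on `L`,
with respect to an action `act` of `L` on `V`:
`(dω)(a₁,…,a_{n+1}) = Σᵢ (−1)^{i+1} act(aᵢ)(ω(a₁,…,âᵢ,…)) +
  Σ_{i<j} (−1)^{i+j} ω(⁅aᵢ,aⱼ⁆, a₁,…,âᵢ,…,âⱼ,…)`. -/
def dGen {L V : Type*} [LieRing L] [AddCommGroup V] (act : L → V → V) :
    {n : ℕ} → ((Fin n → L) → V) → ((Fin (n + 1) → L) → V)
  | 0, ω, a => act (a 0) (ω Fin.elim0)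
  | (m + 1), ω, a =>
      (∑ i : Fin (m + 2), (-1 : ℤ) ^ (i : ℕ) • act (a i) (ω (fun k => a (i.succAbove k)))) +
      ∑ i : Fin (m + 2), ∑ j : Fin (m + 2),
        if h : (i : ℕ) < (j : ℕ) then
          (-1 : ℤ) ^ ((i : ℕ) + (j : ℕ)) • ω (Fin.cons ⁅a i, a j⁆
            (fun k : Fin m => a (j.succAbove
              ((⟨(i : ℕ), by have := j.isLt; omega⟩ : Fin (m + 1)).succAbove k))))
        else 0

/-- The differential `d_ρ` on `C`-valued ℝ-linear forms on `L`. -/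
def dRho {L C : Type*} [LieRing L] [LieAlgebra ℝ L] [CommRing C] [Algebra ℝ C]
    (ρ : L →ₗ[ℝ] Derivation ℝ C C) {n : ℕ} (ω : (Fin n → L) → C) :
    (Fin (n + 1) → L) → C :=
  dGen (fun a c => ρ a c) ω

/-- The differential `d^{∇̄}` on `End ℝ E`-valued ℝ-linear forms on `L`,
where `∇̄_a = [∇_a, ·]`. -/
def dEnd {L E : Type*} [LieRing L] [LieAlgebra ℝ L] [AddCommGroup E] [Module ℝ E]
    (D : L →ₗ[ℝ] Module.End ℝ E) {n : ℕ} (ω : (Fin n → L) → Module.End ℝ E) :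
    (Fin (n + 1) → L) → Module.End ℝ E :=
  dGen (fun a φ => D a * φ - φ * D a) ω

/-- The wedge product (with composition as multiplication of values) of
`End ℝ E`-valued forms:
`(ω∧η)(a₁,…,a_{m+n}) = (1/(m!·n!)) Σ_{τ} sgn τ · ω(a_{τ(1)},…) ∘ η(a_{τ(m+1)},…)`. -/
noncomputable def wedge {L E : Type*} [AddCommGroup E] [Module ℝ E] {m n : ℕ}
    (ω : (Fin m → L) → Module.End ℝ E) (η : (Fin n → L) → Module.End ℝ E) :
    (Fin (m + n) → L) → Module.End ℝ E :=
  fun a => ((m.factorial * n.factorial : ℝ))⁻¹ •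
    ∑ τ : Equiv.Perm (Fin (m + n)), ((Equiv.Perm.sign τ : ℤ) •
      (ω (fun i => a (τ (Fin.castAdd n i))) * η (fun j => a (τ (Fin.natAdd m j)))))

/-- The `p`-th wedge power of an `End ℝ E`-valued 2-form. -/
noncomputable def wpow {L E : Type*} [AddCommGroup E] [Module ℝ E]
    (R : (Fin 2 → L) → Module.End ℝ E) :
    (p : ℕ) → (Fin (2 * p) → L) → Module.End ℝ E
  | 0 => fun _ => 1
  | (p + 1) => fun a => wedge R (wpow R p) (fun i => a (Fin.cast (by omega) i))

/-- The `k`-th wedge power of an `End ℝ E`-valued 1-form. -/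
noncomputable def wpow1 {L E : Type*} [AddCommGroup E] [Module ℝ E]
    (θ : (Fin 1 → L) → Module.End ℝ E) :
    (k : ℕ) → (Fin k → L) → Module.End ℝ E
  | 0 => fun _ => 1
  | (k + 1) => fun a => wedge θ (wpow1 θ k) (fun i => a (Fin.cast (by omega) i))

/-- The Chern character form `ch_p(∇) = Tr_*((R^∇)^{∧p})`. -/
noncomputable def chp {L E : Type*} (C : Type*) [LieRing L] [LieAlgebra ℝ L]
    [CommRing C] [AddCommGroup E] [Module ℝ E] [Module C E]
    (D : L →ₗ[ℝ] Module.End ℝ E) (p : ℕ) : (Fin (2 * p) → L) → C :=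
  fun a => trR C (wpow (curv2 D) p a)

/-- `∫₀ˢ f(t) dt` for a function `f : ℝ → C` given by a polynomial with
coefficients in the ℝ-algebra `C` (and `0` if `f` is not polynomial). -/
noncomputable def intPolyTo {C : Type*} [CommRing C] [Algebra ℝ C] (s : ℝ) (f : ℝ → C) : C :=
  letI := Classical.propDecidable
  if h : ∃ P : Polynomial C, ∀ t : ℝ, f t = Polynomial.eval (algebraMap ℝ C t) P then
    ∑ k ∈ Finset.range (h.choose.natDegree + 1),
      (s ^ (k + 1) / ((k : ℝ) + 1)) • h.choose.coeff k
  else 0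

/-- The valuewise integral over the standard 2-simplex
`Δ² = {(t₁,t₂) : t₁ ≥ 0, t₂ ≥ 0, t₁ + t₂ ≤ 1}` of a `C`-valued polynomial function. -/
noncomputable def intSimplex2 {C : Type*} [CommRing C] [Algebra ℝ C] (f : ℝ → ℝ → C) : C :=
  intPolyTo 1 (fun t1 => intPolyTo (1 - t1) (fun t2 => f t1 t2))

/-- The Chern–Simons transgression form for a pair of ℝ-linear connections:
`cs_p(∇⁰,∇¹) = p·∫₀¹ Tr_*(λ ∧ (R_t)^{∧(p−1)}) dt` where `λ = ∇¹ − ∇⁰` and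
`R_t` is the curvature of `∇⁰ + t•λ`. -/
noncomputable def csPair {L E : Type*} (C : Type*) [LieRing L] [LieAlgebra ℝ L]
    [CommRing C] [Algebra ℝ C] [AddCommGroup E] [Module ℝ E] [Module C E]
    (D0 D1 : L →ₗ[ℝ] Module.End ℝ E) (p : ℕ) : (Fin (2 * (p - 1) + 1) → L) → C :=
  fun a => (p : ℝ) • intPolyTo 1 (fun t =>
    trR C (wedge (fun v : Fin 1 → L => (D1 - D0) (v 0))
      (wpow (curv2 (D0 + t • (D1 - D0))) (p - 1))
      (fun i => a (Fin.cast (by omega) i))))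

/-- The Chern–Simons transgression form for a triple of ℝ-linear connections:
`cs_p(∇⁰,∇¹,∇²) = −p(p−1)·∫_{Δ²} Tr_*(λ₁ ∧ λ₂ ∧ (R_{(t₁,t₂)})^{∧(p−2)}) dt₁dt₂`
where `λᵢ = ∇ⁱ − ∇⁰` and `R_{(t₁,t₂)}` is the curvature of `∇⁰ + t₁•λ₁ + t₂•λ₂`. -/
noncomputable def csTriple {L E : Type*} (C : Type*) [LieRing L] [LieAlgebra ℝ L]
    [CommRing C] [Algebra ℝ C] [AddCommGroup E] [Module ℝ E] [Module C E]
    (D0 D1 D2 : L →ₗ[ℝ] Module.End ℝ E) (p : ℕ) : (Fin (2 * (p - 2) + 2) → L) → C :=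
  fun a => (-((p : ℝ) * ((p : ℝ) - 1))) • intSimplex2 (fun t1 t2 =>
    trR C (wedge (fun v : Fin 1 → L => (D1 - D0) (v 0))
      (wedge (fun v : Fin 1 → L => (D2 - D0) (v 0))
        (wpow (curv2 (D0 + t1 • (D1 - D0) + t2 • (D2 - D0))) (p - 2)))
      (fun i => a (Fin.cast (by omega) i))))



section ListForms

/-- Inhomogeneous forms: functions on lists. -/
structure LF (L A : Type*) where
  /-- the underlying function -/
  fn : List L → A

namespace LF

variable {L A B : Type*}

instance : CoeFun (LF L A) (fun _ => List L → A) := ⟨LF.fn⟩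

theorem ext' {ω η : LF L A} (h : ∀ l, ω l = η l) : ω = η := by
  cases ω; cases η; congr; exact funext h

instance [AddCommGroup A] : Zero (LF L A) := ⟨⟨fun _ => 0⟩⟩
instance [AddCommGroup A] : Add (LF L A) := ⟨fun ω η => ⟨fun l => ω l + η l⟩⟩
instance [AddCommGroup A] : Neg (LF L A) := ⟨fun ω => ⟨fun l => -ω l⟩⟩
instance [AddCommGroup A] : Sub (LF L A) := ⟨fun ω η => ⟨fun l => ω l - η l⟩⟩
instance [AddCommGroup A] : SMul ℕ (LF L A) := ⟨fun n ω => ⟨fun l => n • ω l⟩⟩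
instance [AddCommGroup A] : SMul ℤ (LF L A) := ⟨fun n ω => ⟨fun l => n • ω l⟩⟩
instance [AddCommGroup A] [Module ℝ A] : SMul ℝ (LF L A) := ⟨fun n ω => ⟨fun l => n • ω l⟩⟩

instance [AddCommGroup A] : AddCommGroup (LF L A) :=
  Function.Injective.addCommGroup LF.fn (fun _ _ h => ext' (congrFun h)) rfl (fun _ _ => rfl)
    (fun _ => rfl) (fun _ _ => rfl) (fun _ _ => rfl) (fun _ _ => rfl)

/-- Contraction. -/
def io (x : L) (ω : LF L A) : LF L A := ⟨fun l => ω (x :: l)⟩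

/-- Grading sign. -/
def ep [AddCommGroup A] (ω : LF L A) : LF L A := ⟨fun l => (-1 : ℤ) ^ l.length • ω l⟩

/-- Postcomposition. -/
def mp (f : A → B) (ω : LF L A) : LF L B := ⟨fun l => f (ω l)⟩

theorem io_ap (x : L) (ω : LF L A) (l) : io x ω l = ω (x :: l) := rfl

section add
variable [AddCommGroup A]

@[simp] theorem add_ap (ω η : LF L A) (l : List L) : (ω + η) l = ω l + η l := rfl
@[simp] theorem sub_ap (ω η : LF L A) (l : List L) : (ω - η) l = ω l - η l := rfl
@[simp] theorem neg_ap (ω : LF L A) (l : List L) : (-ω) l = -ω l := rfl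
@[simp] theorem zero_ap (l : List L) : (0 : LF L A) l = 0 := rfl
@[simp] theorem smul_ap [Module ℝ A] (r : ℝ) (ω : LF L A) (l : List L) : (r • ω) l = r • ω l := rfl

@[simp] theorem io_add (x : L) (ω η : LF L A) : io x (ω + η) = io x ω + io x η := rfl
@[simp] theorem io_sub (x : L) (ω η : LF L A) : io x (ω - η) = io x ω - io x η := rfl
@[simp] theorem io_neg (x : L) (ω : LF L A) : io x (-ω) = -io x ω := rfl
@[simp] theorem io_zero (x : L) : io x (0 : LF L A) = 0 := rfl
@[simp] theorem io_smul [Module ℝ A] (x : L) (r : ℝ) (ω : LF L A) : io x (r • ω) = r • io x ω := rfl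

@[simp] theorem ep_nil (ω : LF L A) : ep ω [] = ω [] := by simp [ep]
@[simp] theorem ep_add (ω η : LF L A) : ep (ω + η) = ep ω + ep η :=
  ext' fun l => by simp [ep]
@[simp] theorem ep_neg (ω : LF L A) : ep (-ω) = -ep ω :=
  ext' fun l => by simp [ep]
@[simp] theorem ep_zero : ep (0 : LF L A) = 0 :=
  ext' fun l => by simp [ep]
@[simp] theorem ep_smul [Module ℝ A] (r : ℝ) (ω : LF L A) : ep (r • ω) = r • ep ω :=
  ext' fun l => smul_comm _ _ _
@[simp] theorem ep_ep (ω : LF L A) : ep (ep ω) = ω :=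
  ext' fun l => by simp [ep, smul_smul, ← mul_pow]
@[simp] theorem io_ep (x : L) (ω : LF L A) : io x (ep ω) = -ep (io x ω) :=
  ext' fun l => by simp [ep, io, pow_succ]

end add

section mul
variable [Ring A] [Ring B]

/-- The wedge product, by recursion on the list. -/
def wd : List L → LF L A → LF L A → A
  | [], ω, η => ω [] * η []
  | x :: l, ω, η => wd l (io x ω) η + wd l (ep ω) (io x η)

instance : Mul (LF L A) := ⟨fun ω η => ⟨fun l => wd l ω η⟩⟩
instance : One (LF L A) := ⟨⟨fun l => match l with | [] => 1 | _ :: _ => 0⟩⟩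

@[simp] theorem mul_nil (ω η : LF L A) : (ω * η) [] = ω [] * η [] := rfl
@[simp] theorem io_mul (x : L) (ω η : LF L A) :
    io x (ω * η) = io x ω * η + ep ω * io x η := rfl
theorem mul_cons (x : L) (l) (ω η : LF L A) :
    (ω * η) (x :: l) = (io x ω * η) l + (ep ω * io x η) l := rfl
@[simp] theorem one_nil : (1 : LF L A) [] = 1 := rfl
@[simp] theorem io_one (x : L) : io x (1 : LF L A) = 0 := rfl
@[simp] theorem ep_one : ep (1 : LF L A) = 1 := ext' fun l => by
  cases l
  · simp
  · change _ • (0 : A) = 0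
    simp

theorem add_mul' (ω η θ : LF L A) : (ω + η) * θ = ω * θ + η * θ := by
  refine ext' fun l => ?_
  induction l generalizing ω η θ with
  | nil => simp [add_mul]
  | cons x l ih => simp only [mul_cons, add_ap, io_add, ep_add, ih]; abel

theorem mul_add' (ω η θ : LF L A) : θ * (ω + η) = θ * ω + θ * η := by
  refine ext' fun l => ?_
  induction l generalizing ω η θ with
  | nil => simp [mul_add]
  | cons x l ih => simp only [mul_cons, add_ap, io_add, ih]; abel

theorem zero_mul' (θ : LF L A) : 0 * θ = 0 := by
  have := add_mul' 0 0 θ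
  simpa using this

theorem mul_zero' (θ : LF L A) : θ * 0 = 0 := by
  have := mul_add' 0 0 θ
  simpa using this

theorem neg_mul' (ω θ : LF L A) : (-ω) * θ = -(ω * θ) := by
  rw [eq_neg_iff_add_eq_zero, ← add_mul', neg_add_cancel, zero_mul']

theorem mul_neg' (ω θ : LF L A) : θ * (-ω) = -(θ * ω) := by
  rw [eq_neg_iff_add_eq_zero, ← mul_add', neg_add_cancel, mul_zero']

theorem ep_mul (ω η : LF L A) : ep (ω * η) = ep ω * ep η := by
  refine ext' fun l => ?_
  induction l generalizing ω η with
  | nil => simp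
  | cons x l ih =>
    rw [← io_ap, ← io_ap, io_ep, io_mul, io_mul, io_ep, io_ep, ep_add, neg_mul', mul_neg']
    simp only [neg_ap, add_ap, ih]; abel

theorem mul_assoc' (ω η θ : LF L A) : ω * η * θ = ω * (η * θ) := by
  refine ext' fun l => ?_
  induction l generalizing ω η θ with
  | nil => simp [mul_assoc]
  | cons x l ih =>
    rw [← io_ap, ← io_ap]
    simp only [io_mul, add_mul', mul_add', add_ap, ih, ep_mul]; abel

theorem one_mul' (ω : LF L A) : 1 * ω = ω := by
  refine ext' fun l => ?_
  induction l generalizing ω with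
  | nil => simp
  | cons x l ih =>
    rw [← io_ap, ← io_ap]
    simp only [io_mul, io_one, zero_mul', ep_one, add_ap, ih, zero_ap, zero_add]

theorem mul_one' (ω : LF L A) : ω * 1 = ω := by
  refine ext' fun l => ?_
  induction l generalizing ω with
  | nil => simp
  | cons x l ih =>
    rw [← io_ap, ← io_ap]
    simp only [io_mul, io_one, mul_zero', add_ap, ih, zero_ap, add_zero]

instance : Ring (LF L A) :=
  { (inferInstance : AddCommGroup (LF L A)) with
    mul_assoc := mul_assoc'
    one_mul := one_mul'
    mul_one := mul_one'
    left_distrib := fun a b c => mul_add' b c a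
    right_distrib := add_mul'
    zero_mul := zero_mul'
    mul_zero := mul_zero'
    zsmul := fun n ω => n • ω
    zsmul_zero' := fun a => zero_zsmul a
    zsmul_succ' := fun n a => SubNegMonoid.zsmul_succ' n a
    zsmul_neg' := fun n a => SubNegMonoid.zsmul_neg' n a
    nsmul := fun n ω => n • ω
    nsmul_zero := fun a => zero_nsmul a
    nsmul_succ := fun n a => succ_nsmul a n
    sub_eq_add_neg := sub_eq_add_neg }

theorem smul_mul' [Algebra ℝ A] (r : ℝ) (ω η : LF L A) : (r • ω) * η = r • (ω * η) := by
  refine ext' fun l => ?_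
  induction l generalizing ω η with
  | nil => simp
  | cons x l ih =>
    rw [← io_ap, ← io_ap]
    simp [ih]

theorem mul_smul' [Algebra ℝ A] (r : ℝ) (ω η : LF L A) : ω * (r • η) = r • (ω * η) := by
  refine ext' fun l => ?_
  induction l generalizing ω η with
  | nil => simp
  | cons x l ih =>
    rw [← io_ap, ← io_ap]
    simp [ih]

theorem mp_ep (f : A →+ B) (ω : LF L A) : mp f (ep ω) = ep (mp f ω) :=
  ext' fun l => map_zsmul f _ _

theorem mp_mul (f : A →+* B) (ω η : LF L A) : mp f (ω * η) = mp f ω * mp f η := by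
  refine ext' fun l => ?_
  induction l generalizing ω η with
  | nil => simp [mp]
  | cons x l ih =>
    have h1 := ih (io x ω) η
    have h2 := ih (ep ω) (io x η)
    have h3 : mp f (ep ω) = ep (mp f ω) := mp_ep f.toAddMonoidHom ω
    rw [h3] at h2
    rw [mul_cons]
    change f ((ω * η) (x :: l)) = _
    rw [mul_cons, map_add]
    exact congrArg₂ _ h1 h2

theorem mp_one (f : A →+* B) : mp f (1 : LF L A) = 1 := ext' fun l => by
  cases l
  · exact f.map_one
  · exact f.map_zero

theorem mp_pow (f : A →+* B) (ω : LF L A) (k : ℕ) : mp f (ω ^ k) = mp f ω ^ k := by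
  induction k with
  | zero => simp [mp_one]
  | succ k ih => rw [pow_succ, pow_succ, mp_mul, ih]

/-- A derivation of the coefficients gives a derivation of forms. -/
theorem mp_der (f : A →+ A) (hf : ∀ a b, f (a * b) = f a * b + a * f b) (ω η : LF L A) :
    mp f (ω * η) = mp f ω * η + ω * mp f η := by
  refine ext' fun l => ?_
  induction l generalizing ω η with
  | nil => simp [mp, hf]
  | cons x l ih =>
    have h1 := ih (io x ω) η
    have h2 := ih (ep ω) (io x η)
    rw [mp_ep] at h2
    change f ((ω * η) (x :: l)) = _
    rw [add_ap, mul_cons, mul_cons, mul_cons, map_add]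
    refine (congrArg₂ (· + ·) h1 h2).trans ?_
    simp only [add_ap]
    change ((mp f (io x ω) * η) l + _) + (_ + _) =
      (mp f (io x ω) * η) l + _ + (_ + (ep ω * mp f (io x η)) l)
    abel

/-- Graded cyclicity. -/
theorem cyc {V : Type*} [AddCommGroup V] (T : A →+ V) (hT : ∀ a b, T (a * b) = T (b * a))
    (l : List L) : ∀ ω η : LF L A,
    (ep ω = ω → T ((ω * η) l) = T ((η * ω) l)) ∧
    (ep ω = -ω → T ((ω * η) l) = T ((ep η * ω) l)) := by
  induction l with
  | nil => intro ω η; simp [hT (ω []) (η [])]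
  | cons x l ih =>
    intro ω η
    constructor
    · intro h
      have h' : ep (io x ω) = -io x ω := by
        have := congrArg (io x) h
        rw [io_ep] at this
        rw [← neg_eq_iff_eq_neg, this]
      rw [mul_cons, mul_cons, map_add, map_add, (ih _ _).2 h', h, (ih _ _).1 h, add_comm]
    · intro h
      have h' : ep (io x ω) = io x ω := by
        have := congrArg (io x) h
        rw [io_ep, io_neg] at this
        exact neg_injective this
      rw [mul_cons, mul_cons, map_add, map_add, (ih _ _).1 h', h, io_ep, ep_ep, neg_mul, neg_ap,
        map_neg, (ih _ _).2 h, neg_mul, neg_ap, map_neg, add_comm]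

end mul

section diff
variable [LieRing L]

/-- Lie derivative. -/
def ldr [AddCommGroup A] (act : L → A →+ A) (x : L) : List L → LF L A → A
  | [], ω => act x (ω [])
  | y :: l, ω => ldr act x l (io y ω) - ω (⁅x, y⁆ :: l)

/-- Differential. -/
def dfr [AddCommGroup A] (act : L → A →+ A) : List L → LF L A → A
  | [], _ => 0
  | x :: l, ω => ldr act x l ω - dfr act l (io x ω)

/-- Lie derivative. -/
def Ld [AddCommGroup A] (act : L → A →+ A) (x : L) (ω : LF L A) : LF L A :=
  ⟨fun l => ldr act x l ω⟩

/-- Differential. -/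
def df [AddCommGroup A] (act : L → A →+ A) (ω : LF L A) : LF L A :=
  ⟨fun l => dfr act l ω⟩

section add
variable [AddCommGroup A] [AddCommGroup B] (act : L → A →+ A)

@[simp] theorem Ld_nil (x : L) (ω : LF L A) : Ld act x ω [] = act x (ω []) := rfl
@[simp] theorem io_Ld (x y : L) (ω : LF L A) :
    io y (Ld act x ω) = Ld act x (io y ω) - io ⁅x, y⁆ ω := rfl
@[simp] theorem df_nil (ω : LF L A) : df act ω [] = 0 := rfl
@[simp] theorem io_df (x : L) (ω : LF L A) :
    io x (df act ω) = Ld act x ω - df act (io x ω) := rfl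

theorem Ld_add (x : L) (ω η : LF L A) : Ld act x (ω + η) = Ld act x ω + Ld act x η := by
  refine ext' fun l => ?_
  induction l generalizing ω η with
  | nil => simp
  | cons y l ih =>
    rw [← io_ap, ← io_ap]
    simp [ih]; abel

theorem df_add (ω η : LF L A) : df act (ω + η) = df act ω + df act η := by
  refine ext' fun l => ?_
  induction l generalizing ω η with
  | nil => simp
  | cons y l ih =>
    rw [← io_ap, ← io_ap]
    simp [ih, Ld_add]; abel

theorem df_neg (ω : LF L A) : df act (-ω) = -df act ω := by
  have h0 := df_add act 0 0
  rw [add_zero, left_eq_add] at h0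
  rw [eq_neg_iff_add_eq_zero, ← df_add, neg_add_cancel, h0]

theorem Ld_ep (x : L) (ω : LF L A) : Ld act x (ep ω) = ep (Ld act x ω) := by
  refine ext' fun l => ?_
  induction l generalizing ω with
  | nil => simp
  | cons y l ih =>
    have hn : ∀ η : LF L A, Ld act x (-η) = -Ld act x η := fun η => by
      have h0 := Ld_add act x 0 0
      rw [add_zero, left_eq_add] at h0
      rw [eq_neg_iff_add_eq_zero, ← Ld_add, neg_add_cancel, h0]
    rw [← io_ap, ← io_ap]
    simp only [io_Ld, io_ep, hn, sub_ap, neg_ap, ih, sub_eq_add_neg, ep_add, ep_neg, add_ap]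
    abel

theorem df_ep (ω : LF L A) : df act (ep ω) = -ep (df act ω) := by
  refine ext' fun l => ?_
  induction l generalizing ω with
  | nil => simp
  | cons y l ih =>
    rw [← io_ap, ← io_ap]
    simp only [io_df, io_ep, io_neg, df_neg, sub_ap, neg_ap, ih, sub_eq_add_neg, ep_add, ep_neg,
      add_ap, Ld_ep]
    abel

theorem mp_Ld (act' : L → B →+ B) (T : A →+ B) (hT : ∀ x a, T (act x a) = act' x (T a))
    (x : L) (ω : LF L A) : mp T (Ld act x ω) = Ld act' x (mp T ω) := by
  refine ext' fun l => ?_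
  induction l generalizing ω with
  | nil => simp [mp, hT]
  | cons y l ih =>
    change T (ldr act x l (io y ω) - ω (⁅x, y⁆ :: l)) = _
    rw [map_sub]
    exact congrArg₂ (· - ·) (ih (io y ω)) rfl

theorem mp_df (act' : L → B →+ B) (T : A →+ B) (hT : ∀ x a, T (act x a) = act' x (T a))
    (ω : LF L A) : mp T (df act ω) = df act' (mp T ω) := by
  refine ext' fun l => ?_
  induction l generalizing ω with
  | nil => simp [mp]
  | cons x l ih =>
    change T (ldr act x l ω - dfr act l (io x ω)) = _
    rw [map_sub]
    exact congrArg₂ (· - ·) (congrArg (fun θ : LF L B => θ l) (mp_Ld act act' T hT x ω)) (ih (io x ω))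

end add

section mul
variable [Ring A] (act : L → A →+ A) 

theorem Ld_mul (hact : ∀ x a b, act x (a * b) = act x a * b + a * act x b)
    (x  : L) (ω η : LF L A) :
    Ld act x (ω * η) = Ld act x ω * η + ω * Ld act x η := by
  refine ext' fun l => ?_
  induction l generalizing ω η with
  | nil => simp [hact]
  | cons y l ih =>
    rw [← io_ap, ← io_ap]
    simp only [io_Ld, io_mul, io_add, Ld_add, sub_ap, add_ap, ih, Ld_ep, sub_mul, mul_sub]
    abel

theorem df_mul (hact : ∀ x a b, act x (a * b) = act x a * b + a * act x b)
    (ω  η : LF L A) :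
    df act (ω * η) = df act ω * η + ep ω * df act η := by
  refine ext' fun l => ?_
  induction l generalizing ω η with
  | nil => simp
  | cons y l ih =>
    rw [← io_ap, ← io_ap]
    simp only [io_df, io_mul, io_add, io_ep, df_add, df_ep, Ld_mul act hact, sub_ap, add_ap, ih,
      sub_mul, mul_sub, neg_mul, neg_ap, ep_ep]
    abel

theorem df_one (hact : ∀ x a b, act x (a * b) = act x a * b + a * act x b)
    : df act (1 : LF L A) = 0 := by
  have h := df_mul act hact 1 1
  simpa using h

theorem df_pow (hact : ∀ x a b, act x (a * b) = act x a * b + a * act x b)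
    (R  : LF L A) (h : df act R = 0) (k : ℕ) : df act (R ^ k) = 0 := by
  induction k with
  | zero => rw [pow_zero, df_one act hact]
  | succ k ih => rw [pow_succ, df_mul act hact, ih, h, zero_mul, mul_zero, add_zero]

end mul
end diff

theorem tr_der_pow [Ring A] {V : Type*} [AddCommGroup V] (T : A →+ V)
    (hT : ∀ a b, T (a * b) = T (b * a)) (f : A →+ A)
    (hf : ∀ a b, f (a * b) = f a * b + a * f b) (R : LF L A) (hR : ep R = R) (k j : ℕ) :
    ∀ l, T ((mp f (R ^ k) * R ^ j) l) = (k : ℤ) • T ((mp f R * R ^ (k + j - 1)) l) := by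
  induction k generalizing j with
  | zero =>
    intro l
    have h := mp_der f hf (1 : LF L A) 1
    have : mp f (1 : LF L A) = 0 := by simpa using h
    simp [this]
  | succ k ih =>
    intro l
    rw [pow_succ', mp_der f hf, add_mul, add_ap, map_add, mul_assoc, mul_assoc,
      (cyc T hT l R _).1 hR, mul_assoc, ← pow_succ, ih, ← pow_add]
    have : k + (j + 1) - 1 = k + 1 + j - 1 := by omega
    rw [this]
    have : k + j = k + 1 + j - 1 := by omega
    rw [this]
    push_cast
    rw [add_smul, one_smul, add_comm]

end LF
end ListForms

section Bridges

namespace LF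

variable {L A B : Type*}

section alt
variable [AddCommGroup L] [Module ℝ L]

/-- Multilinearity. -/
def Mlt [AddCommGroup A] [Module ℝ A] (ω : LF L A) : Prop :=
  ∀ l1 l2 (r : ℝ) (x y : L),
    ω (l1 ++ (r • x + y) :: l2) = r • ω (l1 ++ x :: l2) + ω (l1 ++ y :: l2)

/-- Vanishing on equal adjacent arguments. -/
def Alt [AddCommGroup A] (ω : LF L A) : Prop :=
  ∀ l1 l2 (x : L), ω (l1 ++ x :: x :: l2) = 0

/-- Antisymmetry in adjacent arguments. -/
def Sw [AddCommGroup A] (ω : LF L A) : Prop :=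
  ∀ l1 l2 (x y : L), ω (l1 ++ x :: y :: l2) = - ω (l1 ++ y :: x :: l2)

section basic
variable [AddCommGroup A] 

theorem Alt.io {ω : LF L A} (h : Alt ω) (x : L) : Alt (io x ω) :=
  fun l1 l2 y => h (x :: l1) l2 y

theorem Sw.io {ω : LF L A} (h : Sw ω) (x : L) : Sw (io x ω) :=
  fun l1 l2 y => h (x :: l1) l2 y

theorem Alt.ep {ω : LF L A} (h : Alt ω) : Alt (ep ω) :=
  fun l1 l2 y => by simp [LF.ep, h l1 l2 y]

variable [Module ℝ A] 

theorem Mlt.io {ω : LF L A} (h : Mlt ω) (x : L) : Mlt (io x ω) :=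
  fun l1 l2 y => h (x :: l1) l2 y

theorem Mlt.ep {ω : LF L A} (h : Mlt ω) : Mlt (ep ω) :=
  fun l1 l2 r x y => by
    simp only [LF.ep, h l1 l2 r x y, List.length_append, List.length_cons, smul_add]
    rw [smul_comm]

theorem Mlt.sw {ω : LF L A} (h : Mlt ω) (h' : Alt ω) : Sw ω := by
  intro l1 l2 x y
  have a1 : ∀ l1 l2 (x y : L), ω (l1 ++ (x + y) :: l2) = ω (l1 ++ x :: l2) + ω (l1 ++ y :: l2) := by
    intro l1 l2 x y
    simpa using h l1 l2 1 x y
  have h1 := h' l1 l2 (x + y)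
  rw [a1] at h1
  have h2 := a1 (l1 ++ [x]) l2 x y
  have h3 := a1 (l1 ++ [y]) l2 x y
  simp only [List.append_assoc, List.singleton_append] at h2 h3
  rw [h2, h3, h', h', zero_add, add_zero] at h1
  exact eq_neg_of_add_eq_zero_left h1

theorem Sw.far {ω : LF L A} (h : Sw ω) (h' : Alt ω) (l2 : List L) :
    ∀ l1 l3 (x : L), ω (l1 ++ x :: (l2 ++ x :: l3)) = 0 := by
  induction l2 with
  | nil => intro l1 l3 x; exact h' _ _ _
  | cons y l2 ih =>
    intro l1 l3 x
    rw [List.cons_append, h]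
    have := ih (l1 ++ [y]) l3 x
    simp only [List.append_assoc, List.singleton_append] at this
    rw [this, neg_zero]

theorem ofFn_update {n : ℕ} [DecidableEq (Fin n)] (a : Fin n → L) (i : Fin n) (x : L) :
    List.ofFn (Function.update a i x) =
      (List.ofFn a).take i ++ x :: (List.ofFn a).drop (i + 1) := by
  have h0 : (List.ofFn a).set i x = (List.ofFn a).take i ++ x :: (List.ofFn a).drop (i + 1) := by
    rw [List.set_eq_take_append_cons_drop, if_pos (by simp)]
  rw [← h0]
  apply List.ext_getElem
  · simp
  · intro k h1 h2
    simp only [List.getElem_ofFn, List.getElem_set]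
    by_cases hk : (i : ℕ) = k
    · have : (⟨k, by simpa using h1⟩ : Fin n) = i := Fin.ext hk.symm
      rw [this]; simp [hk]
    · rw [if_neg hk, Function.update_of_ne]
      intro hh; exact hk (by rw [← hh])

theorem ofFn_split {n : ℕ} (a : Fin n → L) (i j : Fin n) (hij : i < j) :
    ∃ l1 l2 l3, List.ofFn a = l1 ++ a i :: (l2 ++ a j :: l3) := by
  have h1 : (i : ℕ) < (List.ofFn a).length := by simp
  have h2 : (j : ℕ) < (List.ofFn a).length := by simp
  have h3 : (j : ℕ) - (i + 1) < ((List.ofFn a).drop (i + 1)).length := by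
    have := j.2
    have : (i : ℕ) < j := hij
    simp; omega
  refine ⟨(List.ofFn a).take i, ((List.ofFn a).drop (i + 1)).take (j - (i + 1)),
    ((List.ofFn a).drop (i + 1)).drop (j - (i + 1) + 1), ?_⟩
  have e1 : (List.ofFn a).drop (i + 1) = ((List.ofFn a).drop (i + 1)).take (j - (i + 1)) ++
      a j :: ((List.ofFn a).drop (i + 1)).drop (j - (i + 1) + 1) := by
    conv_lhs => rw [← List.take_append_drop (j - (i + 1)) ((List.ofFn a).drop (i + 1)),
      List.drop_eq_getElem_cons h3]
    congr 2
    rw [List.getElem_drop, List.getElem_ofFn]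
    congr 1
    have : (i : ℕ) < j := hij
    ext; simp; omega
  rw [← e1]
  conv_lhs => rw [← List.take_append_drop i (List.ofFn a), List.drop_eq_getElem_cons h1]
  simp

/-- The alternating map of a multilinear alternating list form. -/
def toAlt (ω : LF L A) (h : Mlt ω) (h' : Alt ω) (n : ℕ) : AlternatingMap ℝ L A (Fin n) where
  toFun a := ω (List.ofFn a)
  map_update_add' a i x y := by
    rw [ofFn_update, ofFn_update, ofFn_update]
    simpa using h _ _ 1 x y
  map_update_smul' a i r x := by
    rw [ofFn_update, ofFn_update]
    have h0 := h ((List.ofFn a).take i) ((List.ofFn a).drop (i + 1)) 1 0 0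
    simp only [smul_zero, add_zero, one_smul, left_eq_add] at h0
    have := h ((List.ofFn a).take i) ((List.ofFn a).drop (i + 1)) r x 0
    rwa [add_zero, h0, add_zero] at this
  map_eq_zero_of_eq' a i j e hij := by
    have hs := h.sw h'
    rcases lt_or_gt_of_ne hij with hlt | hlt
    · obtain ⟨l1, l2, l3, hl⟩ := ofFn_split a i j hlt
      rw [hl, e]
      exact hs.far h' _ _ _ _
    · obtain ⟨l1, l2, l3, hl⟩ := ofFn_split a j i hlt
      rw [hl, e]
      exact hs.far h' _ _ _ _

end basic

theorem Alt.mul [Ring A] {ω η : LF L A} (h : Alt ω) (h' : Alt η) : Alt (ω * η) := by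
  intro l1 l2 x
  induction l1 generalizing ω η with
  | nil =>
    rw [List.nil_append, ← io_ap, ← io_ap]
    have e1 : LF.io x (LF.io x ω) = 0 := ext' fun l => h [] l x
    have e2 : LF.io x (LF.io x η) = 0 := ext' fun l => h' [] l x
    simp [e1, e2]
  | cons y l1 ih =>
    rw [List.cons_append, mul_cons, ih (h.io y) h', ih h.ep (h'.io y), add_zero]

theorem Mlt.mul [Ring A] [Algebra ℝ A] {ω η : LF L A} (h : Mlt ω) (h' : Mlt η) : Mlt (ω * η) := by
  intro l1 l2 r x y
  induction l1 generalizing ω η with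
  | nil =>
    have e1 : LF.io (r • x + y) ω = r • LF.io x ω + LF.io y ω := ext' fun l => h [] l r x y
    have e2 : LF.io (r • x + y) η = r • LF.io x η + LF.io y η := ext' fun l => h' [] l r x y
    simp only [List.nil_append, mul_cons, e1, e2, add_mul, mul_add, smul_mul', mul_smul', add_ap,
      smul_ap, smul_add]
    abel
  | cons z l1 ih =>
    simp only [List.cons_append, mul_cons, ih (h.io z) h', ih h.ep (h'.io z), smul_add]
    abel

theorem Alt.one [Ring A] : Alt (1 : LF L A) := by
  intro l1 l2 x
  cases l1 <;> rfl

theorem Mlt.one [Ring A] [Algebra ℝ A] : Mlt (1 : LF L A) := by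
  have : ∀ l1 l2 (x : L), (1 : LF L A) (l1 ++ x :: l2) = 0 := by
    intro l1 l2 x
    cases l1 <;> rfl
  intro l1 l2 r x y
  simp [this]

theorem Alt.pow [Ring A] {ω : LF L A} (h : Alt ω) (k : ℕ) : Alt (ω ^ k) := by
  induction k with
  | zero => rw [pow_zero]; exact Alt.one
  | succ k ih => rw [pow_succ]; exact ih.mul h

theorem Mlt.pow [Ring A] [Algebra ℝ A] {ω : LF L A} (h : Mlt ω) (k : ℕ) : Mlt (ω ^ k) := by
  induction k with
  | zero => rw [pow_zero]; exact Mlt.one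
  | succ k ih => rw [pow_succ]; exact ih.mul h

theorem Alt.mp [AddCommGroup A] [AddCommGroup B] {ω : LF L A} (h : Alt ω) (f : A →+ B) :
    Alt (mp f ω) := fun l1 l2 x => by
  change f _ = 0
  rw [h, map_zero]

theorem Mlt.mp [AddCommGroup A] [AddCommGroup B] [Module ℝ A] [Module ℝ B] {ω : LF L A}
    (h : Mlt ω) (f : A →ₗ[ℝ] B) : Mlt (mp f ω) := fun l1 l2 r x y => by
  change f _ = r • f _ + f _
  rw [h, map_add, map_smul]

end alt

section dgen
variable [LieRing L] [LieAlgebra ℝ L] [AddCommGroup A] (act : L → A →+ A)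

theorem Ld_ofFn (x : L) : ∀ (m : ℕ) (a : Fin (m + 1) → L) (ω : LF L A), Sw ω →
    Ld act x ω (List.ofFn a) = act x (ω (List.ofFn a)) -
      ∑ j : Fin (m + 1), (-1 : ℤ) ^ (j : ℕ) • ω (⁅x, a j⁆ :: List.ofFn fun k => a (j.succAbove k)) := by
  intro m
  induction m with
  | zero =>
    intro a ω h
    rw [List.ofFn_succ, ← io_ap, io_Ld]
    simp [io_ap]
  | succ m ih =>
    intro a ω h
    rw [List.ofFn_succ, ← io_ap, io_Ld, sub_ap, ih _ _ (h.io _), Fin.sum_univ_succ (n := m + 1)]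
    have : ∀ j : Fin (m + 1),
        (-1 : ℤ) ^ ((j.succ : Fin (m + 2)) : ℕ) • ω (⁅x, a j.succ⁆ ::
          List.ofFn fun k : Fin (m + 1) => a (j.succ.succAbove k)) =
        (-1 : ℤ) ^ (j : ℕ) • LF.io (a 0) ω (⁅x, a j.succ⁆ ::
          List.ofFn fun k => a (j.succAbove k).succ) := by
      intro j
      rw [List.ofFn_succ, io_ap]
      simp only [Fin.succ_succAbove_zero, Fin.succ_succAbove_succ, Fin.val_succ]
      have := h [] (List.ofFn fun k => a (j.succAbove k).succ) ⁅x, a j.succ⁆ (a 0)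
      simp only [List.nil_append] at this
      rw [this, pow_succ]
      simp
    simp only [this, io_ap]
    simp only [Fin.val_zero, pow_zero, one_smul, Fin.zero_succAbove]
    abel

theorem dGen_ofFn' : ∀ (m : ℕ) (a : Fin (m + 2) → L) (ω : LF L A), Sw ω →
    dGen (fun x c => act x c) (fun v : Fin (m + 1) → L => ω (List.ofFn v)) a =
      df act ω (List.ofFn a) := by
  intro m
  induction m with
  | zero =>
    intro a ω h
    simp only [dGen]
    rw [List.ofFn_succ, ← io_ap, io_df, sub_ap, Ld_ofFn act _ _ _ _ h]
    simp only [Fin.sum_univ_two, List.ofFn_succ, List.ofFn_zero]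
    rw [← io_ap _ (df act _), io_df]
    simp [io_ap, Fin.sum_univ_two]
    abel
  | succ m ih =>
    intro a ω h
    rw [List.ofFn_succ, ← io_ap, io_df, sub_ap, Ld_ofFn act _ _ _ _ h, ← ih _ _ (h.io _)]
    simp only [dGen]
    rw [Fin.sum_univ_succ, Fin.sum_univ_succ (n := m + 2)]
    have e1 : ∀ i : Fin (m + 2), (-1 : ℤ) ^ ((i.succ : Fin (m + 3)) : ℕ) •
        act (a i.succ) (ω (List.ofFn fun k : Fin (m + 2) => a (i.succ.succAbove k))) =
        - ((-1 : ℤ) ^ (i : ℕ) • act (a i.succ)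
          (LF.io (a 0) ω (List.ofFn fun k => a (i.succAbove k).succ))) := by
      intro i
      rw [List.ofFn_succ, io_ap, Fin.val_succ, pow_succ]
      simp only [Fin.succ_succAbove_zero, Fin.succ_succAbove_succ]
      simp
    simp only [e1, Finset.sum_neg_distrib]
    have e2 : (∑ j : Fin (m + 3), if hh : ((0 : Fin (m + 3)) : ℕ) < (j : ℕ) then
          (-1 : ℤ) ^ (((0 : Fin (m + 3)) : ℕ) + (j : ℕ)) • ω (List.ofFn (Fin.cons ⁅a 0, a j⁆
            (fun k : Fin (m + 1) => a (j.succAbove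
              ((⟨((0 : Fin (m + 3)) : ℕ), by have := j.isLt; omega⟩ : Fin (m + 2)).succAbove k))) : Fin (m + 2) → L))
        else 0) = - ∑ j : Fin (m + 2), (-1 : ℤ) ^ (j : ℕ) •
          ω (⁅a 0, a j.succ⁆ :: List.ofFn fun k => a (j.succAbove k).succ) := by
      rw [Fin.sum_univ_succ, ← Finset.sum_neg_distrib]
      simp only [Fin.val_zero, lt_irrefl, dite_false, zero_add, Fin.val_succ, Nat.succ_pos,
        dite_true]
      refine Finset.sum_congr rfl fun j _ => ?_
      rw [pow_succ, List.ofFn_succ]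
      simp only [Fin.cons_zero, Fin.cons_succ]
      have : ∀ k : Fin (m + 1), (⟨0, by omega⟩ : Fin (m + 2)).succAbove k = k.succ :=
        fun k => Fin.zero_succAbove k
      simp only [this, Fin.succ_succAbove_succ]
      simp
    have e3 : ∀ i : Fin (m + 2), (∑ j : Fin (m + 3),
        if hh : ((i.succ : Fin (m + 3)) : ℕ) < (j : ℕ) then
          (-1 : ℤ) ^ (((i.succ : Fin (m + 3)) : ℕ) + (j : ℕ)) • ω (List.ofFn (Fin.cons ⁅a i.succ, a j⁆
            (fun k : Fin (m + 1) => a (j.succAbove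
              ((⟨((i.succ : Fin (m + 3)) : ℕ), by have := j.isLt; omega⟩ : Fin (m + 2)).succAbove k))) : Fin (m + 2) → L))
        else 0) = - ∑ j : Fin (m + 2), if hh : (i : ℕ) < (j : ℕ) then
          (-1 : ℤ) ^ ((i : ℕ) + (j : ℕ)) • LF.io (a 0) ω
            (List.ofFn (Fin.cons ⁅a i.succ, a j.succ⁆
            (fun k : Fin m => a (j.succAbove
              ((⟨(i : ℕ), by have := j.isLt; omega⟩ : Fin (m + 1)).succAbove k)).succ) : Fin (m + 1) → L))
        else 0 := by
      intro i
      rw [Fin.sum_univ_succ, ← Finset.sum_neg_distrib]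
      rw [dif_neg (by simp), zero_add]
      refine Finset.sum_congr rfl fun j _ => ?_
      by_cases hij : (i : ℕ) < j
      · rw [dif_pos hij, dif_pos (show ((i.succ : Fin (m + 3)) : ℕ) < (j.succ : Fin (m + 3)) by
          simp only [Fin.val_succ]; omega)]
        rw [List.ofFn_succ, List.ofFn_succ, List.ofFn_succ, io_ap]
        simp only [Fin.cons_zero, Fin.cons_succ]
        have hi : (⟨(i : ℕ) + 1, by have := j.isLt; omega⟩ : Fin (m + 2)) =
          Fin.succ (⟨(i : ℕ), by have := j.isLt; omega⟩ : Fin (m + 1)) := rfl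
        simp only [Fin.val_succ, hi, Fin.succ_succAbove_zero, Fin.succ_succAbove_succ]
        have := h [] (List.ofFn fun k : Fin m => a (j.succAbove
              ((⟨(i : ℕ), by have := j.isLt; omega⟩ : Fin (m + 1)).succAbove k)).succ)
              ⁅a i.succ, a j.succ⁆ (a 0)
        simp only [List.nil_append] at this
        rw [this]
        have hs : (-1 : ℤ) ^ ((i : ℕ) + 1 + (j + 1)) = (-1) ^ ((i : ℕ) + j) := by
          rw [show (i : ℕ) + 1 + (j + 1) = (i + j) + 2 by ring, pow_add]; simp
        rw [hs, smul_neg]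
      · rw [dif_neg hij, dif_neg (show ¬ ((i.succ : Fin (m + 3)) : ℕ) < (j.succ : Fin (m + 3)) by
          simp only [Fin.val_succ]; omega), neg_zero]
    rw [e2]
    simp only [e3, Finset.sum_neg_distrib]
    simp only [Fin.val_zero, pow_zero, one_smul, Fin.zero_succAbove]
    abel

theorem dGen_ofFn (n : ℕ) (a : Fin (n + 1) → L) (ω : LF L A) (h : Sw ω) :
    dGen (fun x c => act x c) (fun v : Fin n → L => ω (List.ofFn v)) a =
      df act ω (List.ofFn a) := by
  cases n with
  | zero =>
    rw [List.ofFn_succ, ← io_ap, io_df]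
    simp [dGen]
  | succ m => exact dGen_ofFn' act m a ω h

end dgen
end LF
end Bridges

section WpowBridge

namespace LF

variable {L A : Type*}

section listside
variable [Ring A]

theorem const_mul (ω S : LF L A) (h : ∀ x l, ω (x :: l) = 0) (l : List L) :
    (ω * S) l = ω [] * S l := by
  induction l generalizing S with
  | nil => rfl
  | cons x l ih =>
    have e1 : io x ω = 0 := ext' fun l => h x l
    have e2 : ep ω = ω := ext' fun l => by
      cases l with
      | nil => simp
      | cons y l => simp only [ep, h, smul_zero]
    rw [mul_cons, e1, e2, zero_mul, zero_ap, zero_add, ih]; rfl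

theorem ep_odd (θ : LF L A) (h : ∀ l, l.length ≠ 1 → θ l = 0) : ep θ = -θ := ext' fun l => by
  by_cases hl : l.length = 1
  · simp [ep, hl]
  · simp [ep, h l hl]

theorem ep_even (θ : LF L A) (h : ∀ l, l.length ≠ 2 → θ l = 0) : ep θ = θ := ext' fun l => by
  by_cases hl : l.length = 2
  · simp [ep, hl]
  · simp [ep, h l hl]

theorem one_mul_ofFn (θ : LF L A) (h : ∀ l, l.length ≠ 1 → θ l = 0) :
    ∀ (n : ℕ) (a : Fin (n + 1) → L) (S : LF L A), (θ * S) (List.ofFn a) =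
      ∑ i : Fin (n + 1), (-1 : ℤ) ^ (i : ℕ) • (θ [a i] * S (List.ofFn fun k => a (i.succAbove k))) := by
  intro n
  have hc : ∀ x S l, (io x θ * S) l = θ [x] * S l := fun x S l => const_mul (io x θ) S
    (fun y l => h _ (by simp)) l
  induction n with
  | zero =>
    intro a S
    rw [List.ofFn_succ, mul_cons, hc, ep_odd θ h]
    simp [h [] (by simp)]
  | succ n ih =>
    intro a S
    rw [List.ofFn_succ, mul_cons, hc, ep_odd θ h, neg_mul, neg_ap, ih, Fin.sum_univ_succ (n := n + 1),
      ← Finset.sum_neg_distrib]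
    congr 1
    · simp only [Fin.val_zero, pow_zero, one_smul, Fin.zero_succAbove]
    · refine Finset.sum_congr rfl fun i _ => ?_
      rw [List.ofFn_succ (f := fun k => a (i.succ.succAbove k))]
      simp only [Fin.succ_succAbove_zero, Fin.succ_succAbove_succ, Fin.val_succ, pow_succ, io_ap,
        mul_neg, mul_one, neg_smul]

theorem two_mul_ofFn (R : LF L A) (h : ∀ l, l.length ≠ 2 → R l = 0)
    (hs : ∀ x y, R [x, y] = - R [y, x]) :
    ∀ (n : ℕ) (a : Fin (n + 1) → L) (S : LF L A),
      ∑ i : Fin (n + 1), (-1 : ℤ) ^ (i : ℕ) • ((io (a i) R * S) (List.ofFn fun k => a (i.succAbove k)))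
      = (R * S) (List.ofFn a) + (R * S) (List.ofFn a) := by
  intro n
  have h1 : ∀ x l, l.length ≠ 1 → io x R l = 0 := fun x l hl => h _ (by simpa using hl)
  induction n with
  | zero =>
    intro a S
    rw [List.ofFn_succ, mul_cons]
    simp [h [] (by simp), h1 _ [] (by simp)]
  | succ n ih =>
    intro a S
    rw [List.ofFn_succ, mul_cons, ep_even R h, Fin.sum_univ_succ (n := n + 1)]
    have e : ∀ i : Fin (n + 1), (-1 : ℤ) ^ ((i.succ : Fin (n + 2)) : ℕ) •
        ((io (a i.succ) R * S) (List.ofFn fun k : Fin (n + 1) => a (i.succ.succAbove k))) =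
        (-1 : ℤ) ^ (i : ℕ) • (io (a 0) R [a i.succ] * S (List.ofFn fun k => a (i.succAbove k).succ)) +
        (-1 : ℤ) ^ (i : ℕ) • ((io (a i.succ) R * io (a 0) S)
          (List.ofFn fun k => a (i.succAbove k).succ)) := by
      intro i
      rw [List.ofFn_succ, mul_cons, ep_odd _ (h1 _), const_mul]
      · simp only [Fin.succ_succAbove_zero, Fin.succ_succAbove_succ, Fin.val_succ, pow_succ, io_ap,
          mul_neg, mul_one, neg_smul, hs (a 0) (a i.succ), neg_mul, neg_ap, smul_add, smul_neg]
        abel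
      · intro y l
        exact h _ (by simp)
    simp only [e]
    rw [Finset.sum_add_distrib, ih (fun k => a k.succ), ← one_mul_ofFn _ (h1 _) _ (fun k => a k.succ)]
    simp only [Fin.val_zero, pow_zero, one_smul, Fin.zero_succAbove]
    abel

end listside

theorem perm_expand {V : Type*} [AddCommGroup V] (n : ℕ) (F : (Fin (n + 1) → L) → V)
    (a : Fin (n + 1) → L) :
    ∑ τ : Equiv.Perm (Fin (n + 1)), (Equiv.Perm.sign τ : ℤ) • F (fun i => a (τ i)) =
      ∑ i : Fin (n + 1), (-1 : ℤ) ^ (i : ℕ) • ∑ σ : Equiv.Perm (Fin n),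
        (Equiv.Perm.sign σ : ℤ) • F (Fin.cons (a i) fun k => a (i.succAbove (σ k))) := by
  simp only [Finset.smul_sum]
  rw [← Fintype.sum_prod_type']
  symm
  let e : Fin (n + 1) × Equiv.Perm (Fin n) → Equiv.Perm (Fin (n + 1)) :=
    fun p => p.1.cycleRange.symm * Equiv.Perm.decomposeFin.symm (0, p.2)
  have e0 : ∀ p, e p 0 = p.1 := by
    intro p
    simp only [e, Equiv.Perm.mul_apply, Equiv.Perm.decomposeFin_symm_apply_zero]
    exact Fin.cycleRange_symm_zero _
  have e1 : ∀ p k, e p (Fin.succ k) = p.1.succAbove (p.2 k) := by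
    intro p k
    simp only [e, Equiv.Perm.mul_apply, Equiv.Perm.decomposeFin_symm_apply_succ, Equiv.swap_self,
      Equiv.refl_apply]
    exact Fin.cycleRange_symm_succ _ _
  have hinj : Function.Injective e := by
    rintro ⟨i, σ⟩ ⟨j, σ'⟩ h
    have hi : i = j := by
      have := e0 (i, σ)
      rw [h, e0] at this
      exact this.symm
    subst hi
    congr 1
    ext k
    have := e1 (i, σ) k
    rw [h, e1] at this
    exact congrArg Fin.val (Fin.succAbove_right_injective this.symm)
  have hb : Function.Bijective e := by
    rw [Fintype.bijective_iff_injective_and_card]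
    refine ⟨hinj, ?_⟩
    simp [Fintype.card_perm, Nat.factorial_succ]
  refine Fintype.sum_bijective e hb _ _ ?_
  rintro ⟨i, σ⟩
  rw [smul_smul]
  congr 1
  · simp only [e, Equiv.Perm.sign_mul, Equiv.Perm.sign_symm, Fin.sign_cycleRange]
    rw [Equiv.Perm.decomposeFin.symm_sign]
    simp
  · congr 1
    ext k
    refine Fin.cases ?_ (fun k => ?_) k
    · rw [e0]; rfl
    · rw [e1]; rfl

section final
variable {E : Type*} [AddCommGroup E] [Module ℝ E]

theorem wedge_perm {m n : ℕ} (ω : (Fin m → L) → Module.End ℝ E) (η : (Fin n → L) → Module.End ℝ E)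
    (a : Fin (m + n) → L) (σ : Equiv.Perm (Fin (m + n))) :
    wedge ω η (fun i => a (σ i)) = (Equiv.Perm.sign σ : ℤ) • wedge ω η a := by
  unfold wedge
  rw [smul_comm]
  congr 1
  symm
  rw [Finset.smul_sum, ← Equiv.sum_comp (Equiv.mulLeft σ)]
  refine Finset.sum_congr rfl fun τ _ => ?_
  rw [smul_smul]
  simp only [Equiv.coe_mulLeft, Equiv.Perm.mul_apply, Equiv.Perm.sign_mul]
  congr 1
  rw [Units.val_mul, ← mul_assoc, ← Units.val_mul]
  simp

theorem wpow_perm (R : (Fin 2 → L) → Module.End ℝ E) (p : ℕ) (a : Fin (2 * p) → L)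
    (σ : Equiv.Perm (Fin (2 * p))) :
    wpow R p (fun i => a (σ i)) = (Equiv.Perm.sign σ : ℤ) • wpow R p a := by
  cases p with
  | zero =>
    have : σ = 1 := by ext i; exact i.elim0
    subst this
    simp [wpow]
  | succ p =>
    have hc : 2 + 2 * p = 2 * (p + 1) := by ring
    have := wedge_perm R (wpow R p) (fun i => a (Fin.cast hc i))
      ((finCongr hc).symm.permCongr σ)
    rw [Equiv.Perm.sign_permCongr] at this
    simp only [wpow]
    rw [← this]
    congr 1

theorem wedge_two (R : (Fin 2 → L) → Module.End ℝ E) {n : ℕ} (S : (Fin n → L) → Module.End ℝ E)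
    (hS : ∀ (a : Fin n → L) (σ : Equiv.Perm (Fin n)),
      S (fun i => a (σ i)) = (Equiv.Perm.sign σ : ℤ) • S a)
    (hc : 2 + n = n + 2) (b : Fin (n + 2) → L) :
    wedge R S (fun i => b (Fin.cast hc i)) = (2 : ℝ)⁻¹ • ∑ i : Fin (n + 2), (-1 : ℤ) ^ (i : ℕ) •
      ∑ j : Fin (n + 1), (-1 : ℤ) ^ (j : ℕ) • (R ![b i, b (i.succAbove j)] *
        S (fun k => b (i.succAbove (j.succAbove k)))) := by
  have h1 : ∑ τ : Equiv.Perm (Fin (2 + n)), ((Equiv.Perm.sign τ : ℤ) •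
      (R (fun i => b (Fin.cast hc (τ (Fin.castAdd n i)))) *
        S (fun j => b (Fin.cast hc (τ (Fin.natAdd 2 j)))))) =
      ∑ τ : Equiv.Perm (Fin (n + 2)), ((Equiv.Perm.sign τ : ℤ) •
        (fun v : Fin (n + 2) → L => R ![v 0, v 1] * S (fun j => v j.succ.succ)) fun i => b (τ i)) := by
    rw [← Equiv.sum_comp (finCongr hc).permCongr]
    refine Finset.sum_congr rfl fun τ _ => ?_
    rw [Equiv.Perm.sign_permCongr]
    congr 2
    · congr 1
      ext i
      fin_cases i <;> simp <;> rfl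
    · congr 1
      ext j
      simp only [Equiv.permCongr_apply, finCongr_apply, finCongr_symm]
      congr 3
      ext
      simp
      omega
  unfold wedge
  rw [h1, perm_expand (n + 1) (fun v : Fin (n + 2) → L => R ![v 0, v 1] * S (fun j => v j.succ.succ)) b]
  have h2 : ∀ i : Fin (n + 2), ∑ σ : Equiv.Perm (Fin (n + 1)), (Equiv.Perm.sign σ : ℤ) •
      (fun v : Fin (n + 2) → L => R ![v 0, v 1] * S (fun j => v j.succ.succ))
        (Fin.cons (b i) fun k => b (i.succAbove (σ k))) =
      (n.factorial : ℝ) • ∑ j : Fin (n + 1), (-1 : ℤ) ^ (j : ℕ) • (R ![b i, b (i.succAbove j)] *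
        S (fun k => b (i.succAbove (j.succAbove k)))) := by
    intro i
    have := perm_expand n (fun v : Fin (n + 1) → L => R ![b i, v 0] * S (fun j => v j.succ))
      (fun k => b (i.succAbove k))
    refine Eq.trans ?_ (this.trans ?_)
    · refine Finset.sum_congr rfl fun σ _ => ?_
      rfl
    · rw [Finset.smul_sum]
      refine Finset.sum_congr rfl fun j _ => ?_
      rw [smul_comm]
      congr 1
      simp only [Fin.cons_zero, Fin.cons_succ]
      have h3 : ∀ σ : Equiv.Perm (Fin n), (Equiv.Perm.sign σ : ℤ) •
          (R ![b i, b (i.succAbove j)] * S (fun k => b (i.succAbove (j.succAbove (σ k))))) =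
          R ![b i, b (i.succAbove j)] * S (fun k => b (i.succAbove (j.succAbove k))) := by
        intro σ
        rw [hS (fun k => b (i.succAbove (j.succAbove k))) σ, mul_smul_comm, smul_smul,
          ← Units.val_mul]
        simp
      simp only [h3]
      rw [Finset.sum_const, Finset.card_univ, Fintype.card_perm, Fintype.card_fin,
        Nat.cast_smul_eq_nsmul]
  simp only [h2]
  rw [mul_inv, mul_comm, mul_smul]
  have hne : (n.factorial : ℝ) ≠ 0 := by positivity
  simp only [smul_comm _ (n.factorial : ℝ)]
  rw [← Finset.smul_sum, smul_comm (Nat.factorial 2 : ℝ)⁻¹, smul_smul,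
    inv_mul_cancel₀ hne, one_smul]
  simp

/-- The curvature as a list form. -/
def lcurv [LieRing L] [LieAlgebra ℝ L] (D : L →ₗ[ℝ] Module.End ℝ E) : LF L (Module.End ℝ E) :=
  ⟨fun l => match l with
    | [x, y] => curv D x y
    | _ => 0⟩

theorem wpow_ofFn [LieRing L] [LieAlgebra ℝ L] (D : L →ₗ[ℝ] Module.End ℝ E) (p : ℕ) :
    ∀ a : Fin (2 * p) → L, wpow (curv2 D) p a = (lcurv D ^ p) (List.ofFn a) := by
  induction p with
  | zero => intro a; simp [wpow]
  | succ p ih =>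
    intro a
    have h2 : ∀ l : List L, l.length ≠ 2 → lcurv D l = 0 := by
      intro l hl
      match l, hl with
      | [], _ => rfl
      | [x], _ => rfl
      | [x, y], hl => simp at hl
      | x :: y :: z :: l, _ => rfl
    have hs : ∀ x y, lcurv D [x, y] = - lcurv D [y, x] := by
      intro x y
      change curv D x y = - curv D y x
      unfold curv
      rw [← lie_skew x y, map_neg]
      abel
    have h := wedge_two (curv2 D) (wpow (curv2 D) p) (wpow_perm _ _) (by ring) a
    refine h.trans ?_
    have h3 := two_mul_ofFn (lcurv D) h2 hs (2 * p + 1) a (lcurv D ^ p)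
    rw [← pow_succ', ← two_smul ℝ] at h3
    rw [inv_smul_eq_iff₀ two_ne_zero, show List.ofFn a = List.ofFn (n := 2 * p + 1 + 1) a from rfl,
      ← h3]
    refine Finset.sum_congr rfl fun i _ => ?_
    congr 1
    rw [one_mul_ofFn (io (a i) (lcurv D)) (fun l hl => h2 _ (by simpa using hl))]
    refine Finset.sum_congr rfl fun j _ => ?_
    rw [← ih]
    rfl

end final
end LF
end WpowBridge

section Transgression

namespace LF

variable {L S : Type*}

/-- The 2-form supported on lists of length two. -/
def K2 [AddCommGroup S] (K : L → L → S) : LF L S :=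
  ⟨fun l => match l with
    | [x, y] => K x y
    | _ => 0⟩

/-- The 1-form supported on lists of length one. -/
def K1 [AddCommGroup S] (K : L → S) : LF L S :=
  ⟨fun l => match l with
    | [x] => K x
    | _ => 0⟩

section
variable [AddCommGroup S]

theorem K2_two (K : L → L → S) (x y : L) : K2 K [x, y] = K x y := rfl
theorem K1_one (K : L → S) (x : L) : K1 K [x] = K x := rfl

theorem K2_supp (K : L → L → S) (l : List L) (hl : l.length ≠ 2) : K2 K l = 0 := by
  match l, hl with
  | [], _ => rfl
  | [x], _ => rfl
  | [x, y], hl => simp at hl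
  | x :: y :: z :: l, _ => rfl

theorem K1_supp (K : L → S) (l : List L) (hl : l.length ≠ 1) : K1 K l = 0 := by
  match l, hl with
  | [], _ => rfl
  | [x], hl => simp at hl
  | x :: y :: l, _ => rfl

theorem K1_alt [AddCommGroup L] (K : L → S) : Alt (K1 K) := fun l1 l2 x =>
  K1_supp _ _ (by simp; omega)

theorem K2_alt [AddCommGroup L] (K : L → L → S) (h : ∀ x, K x x = 0) : Alt (K2 K) := by
  intro l1 l2 x
  by_cases hl : (l1 ++ x :: x :: l2).length = 2
  · have h1 : l1 = [] := List.length_eq_zero_iff.1 (by simp at hl; omega)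
    have h2 : l2 = [] := List.length_eq_zero_iff.1 (by simp at hl; omega)
    subst h1 h2
    exact h x
  · exact K2_supp _ _ hl

variable [AddCommGroup L] [Module ℝ L] [Module ℝ S]

theorem K1_mlt (K : L → S) (h : ∀ (r : ℝ) x y, K (r • x + y) = r • K x + K y) : Mlt (K1 K) := by
  intro l1 l2 r x y
  by_cases hl : l1.length + l2.length = 0
  · have h1 : l1 = [] := List.length_eq_zero_iff.1 (by omega)
    have h2 : l2 = [] := List.length_eq_zero_iff.1 (by omega)
    subst h1 h2
    exact h r x y
  · rw [K1_supp _ _ (by simp; omega), K1_supp _ _ (by simp; omega), K1_supp _ _ (by simp; omega)]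
    simp

theorem K2_mlt (K : L → L → S) (h : ∀ (r : ℝ) x y z, K (r • x + y) z = r • K x z + K y z)
    (h' : ∀ (r : ℝ) x y z, K z (r • x + y) = r • K z x + K z y) : Mlt (K2 K) := by
  intro l1 l2 r x y
  by_cases hl : l1.length + l2.length = 1
  · match l1, l2, hl with
    | [], [z], _ => exact h r x y z
    | [z], [], _ => exact h' r x y z
    | [], z :: w :: l, hl => simp at hl
    | z :: w :: l, _, hl => simp at hl; omega
    | z :: l, w :: l', hl => simp at hl; omega
    | [], [], hl => simp at hl
  · rw [K2_supp _ _ (by simp; omega), K2_supp _ _ (by simp; omega), K2_supp _ _ (by simp; omega)]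
    simp
end

theorem Ld_supp [LieRing L] [AddCommGroup S] (act : L → S →+ S) (x : L) (n : ℕ) (l : List L) :
    ∀ (ω : LF L S), (∀ l : List L, l.length ≠ n → ω l = 0) → l.length ≠ n → Ld act x ω l = 0 := by
  induction l generalizing n with
  | nil => intro ω h hl; rw [Ld_nil, h _ hl, map_zero]
  | cons y l ih =>
    intro ω h hl
    change Ld act x (io y ω) l - ω (⁅x, y⁆ :: l) = 0
    rw [h _ (by simpa using hl), sub_zero]
    cases n with
    | zero =>
      have : io y ω = 0 := ext' fun l => h _ (by simp)
      have h0 := Ld_add act x (0 : LF L S) 0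
      rw [add_zero, left_eq_add] at h0
      rw [this, h0]; rfl
    | succ n =>
      exact ih n _ (fun l' hl' => h _ (by simpa using hl')) (by simpa using hl)

theorem df_supp [LieRing L] [AddCommGroup S] (act : L → S →+ S) (n : ℕ) (l : List L) :
    ∀ (ω : LF L S), (∀ l : List L, l.length ≠ n → ω l = 0) → l.length ≠ n + 1 → df act ω l = 0 := by
  induction l generalizing n with
  | nil => intro ω h hl; rfl
  | cons y l ih =>
    intro ω h hl
    change Ld act y ω l - df act (io y ω) l = 0
    rw [Ld_supp act y n l ω h (by simpa using hl), zero_sub, neg_eq_zero]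
    cases n with
    | zero =>
      have : io y ω = 0 := ext' fun l => h _ (by simp)
      have h0 := df_add act (0 : LF L S) 0
      rw [add_zero, left_eq_add] at h0
      rw [this, h0]; rfl
    | succ n =>
      exact ih n _ (fun l' hl' => h _ (by simpa using hl')) (by simpa using hl)

theorem transgr [LieRing L] [LieAlgebra ℝ L] [Ring S] [Algebra ℝ S]
    (act : L → S →+ S) (hact : ∀ x a b, act x (a * b) = act x a * b + a * act x b)
    (K : L → L → S) (hK0 : ∀ x, K x x = 0)
    (hK1 : ∀ (r : ℝ) x y z, K (r • x + y) z = r • K x z + K y z)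
    (hK2 : ∀ (r : ℝ) x y z, K z (r • x + y) = r • K z x + K z y)
    (hB : ∀ x y z, act x (K y z) - K y ⁅x, z⁆ - K ⁅x, y⁆ z -
      (act y (K x z) - K x ⁅y, z⁆ - act z (K x y)) = 0)
    (Lam : L → S) (hL : ∀ (r : ℝ) x y, Lam (r • x + y) = r • Lam x + Lam y)
    (der : S →+ S) (hder : ∀ a b, der (a * b) = der a * b + a * der b)
    (hLam : ∀ x y, act x (Lam y) - Lam ⁅x, y⁆ - act y (Lam x) = der (K x y))
    {C : Type*} [AddCommGroup C] [Module ℝ C] (rho : L → C →+ C)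
    (T : S →ₗ[ℝ] C) (hT : ∀ a b, T (a * b) = T (b * a)) (hTa : ∀ x a, T (act x a) = rho x (T a))
    (q n : ℕ) :
    ∃ η : AlternatingMap ℝ L C (Fin n), ∀ a : Fin (n + 1) → L,
      dGen (fun x c => rho x c) η a = T (der ((K2 K ^ (q + 1)) (List.ofFn a))) := by
  have hR : ep (K2 K) = K2 K := ep_even _ (K2_supp K)
  have hdR : df act (K2 K) = 0 := ext' fun l => by
    by_cases hl : l.length = 3
    · match l, hl with
      | [x, y, z], _ =>
        have := hB x y z
        refine Eq.trans ?_ this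
        change act x (K y z) - K y ⁅x, z⁆ - K ⁅x, y⁆ z -
          (act y (K x z) - K x ⁅y, z⁆ - (act z (K x y) - 0)) = _
        rw [sub_zero]
    · exact df_supp act 2 l _ (K2_supp K) hl
  have hdL : df act (K1 Lam) = mp der (K2 K) := ext' fun l => by
    by_cases hl : l.length = 2
    · match l, hl with
      | [x, y], _ =>
        refine Eq.trans ?_ (hLam x y)
        change act x (Lam y) - Lam ⁅x, y⁆ - (act y (Lam x) - 0) = _
        rw [sub_zero]
    · rw [df_supp act 1 l _ (K1_supp Lam) hl]
      change _ = der (K2 K l)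
      rw [K2_supp K l hl, map_zero]
  have hm : Mlt (mp T (K1 Lam * K2 K ^ q)) := ((K1_mlt _ hL).mul ((K2_mlt _ hK1 hK2).pow q)).mp T
  have ha : Alt (mp T (K1 Lam * K2 K ^ q)) :=
    ((K1_alt _).mul ((K2_alt _ hK0).pow q)).mp T.toAddMonoidHom
  have hm' : Mlt (mp (fun c : C => ((q + 1 : ℕ) : ℝ) • c) (mp T (K1 Lam * K2 K ^ q))) :=
    hm.mp (LinearMap.lsmul ℝ C ((q + 1 : ℕ) : ℝ))
  have ha' : Alt (mp (fun c : C => ((q + 1 : ℕ) : ℝ) • c) (mp T (K1 Lam * K2 K ^ q))) :=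
    ha.mp (LinearMap.lsmul ℝ C ((q + 1 : ℕ) : ℝ)).toAddMonoidHom
  refine ⟨toAlt _ hm' ha' n, fun a => ?_⟩
  have e := dGen_ofFn rho n a _ (hm'.sw ha')
  refine e.trans ?_
  have e1 := mp_df rho rho (LinearMap.lsmul ℝ C ((q + 1 : ℕ) : ℝ)).toAddMonoidHom
    (fun x c => by
      change ((q + 1 : ℕ) : ℝ) • rho x c = rho x (((q + 1 : ℕ) : ℝ) • c)
      rw [Nat.cast_smul_eq_nsmul, Nat.cast_smul_eq_nsmul, map_nsmul]) (mp T (K1 Lam * K2 K ^ q))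
  have e2 := mp_df act rho T.toAddMonoidHom hTa (K1 Lam * K2 K ^ q)
  rw [df_mul act hact, hdL, df_pow act hact _ hdR, mul_zero, add_zero] at e2
  have e3 := tr_der_pow T.toAddMonoidHom hT der hder (K2 K) hR (q + 1) 0 (List.ofFn a)
  have e4 := congrArg (fun ω : LF L C => ω (List.ofFn a)) e1
  have e5 := congrArg (fun ω : LF L C => ω (List.ofFn a)) e2
  refine e4.symm.trans ?_
  change ((q + 1 : ℕ) : ℝ) • df rho (mp T (K1 Lam * K2 K ^ q)) (List.ofFn a) = _
  have e6 : df rho (mp T (K1 Lam * K2 K ^ q)) (List.ofFn a) =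
    T ((mp der (K2 K) * K2 K ^ q) (List.ofFn a)) := e5.symm
  rw [e6]
  simp only [pow_zero, mul_one, add_zero, Nat.add_sub_cancel] at e3
  refine Eq.trans ?_ e3.symm
  rw [Nat.cast_smul_eq_nsmul, natCast_zsmul]
  rfl

end LF
end Transgression

section TraceSide

namespace LF

variable {C E : Type*} [CommRing C] [Algebra ℝ C]
  [AddCommGroup E] [Module ℝ E] [Module C E] [IsScalarTower ℝ C E]

theorem trace_conn [Module.Finite C E] [Module.Free C E] (r : Derivation ℝ C C)
    (D : Module.End ℝ E) (hD : ∀ (f : C) (e : E), D (f • e) = f • D e + r f • e)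
    (g g' : E →ₗ[C] E) (hg : ∀ e, g' e = D (g e) - g (D e)) :
    LinearMap.trace C E g' = r (LinearMap.trace C E g) := by
  let b := Module.Free.chooseBasis C E
  let Γ : E →ₗ[C] E := b.constr C (fun i => D (b i))
  have hΓ : ∀ i, Γ (b i) = D (b i) := fun i => b.constr_basis C _ i
  have h1 : ∀ e, D e = Γ e + ∑ i, r (b.repr e i) • b i := by
    intro e
    conv_lhs => rw [← b.sum_repr e]
    conv_rhs => enter [1]; rw [← b.sum_repr e]
    rw [map_sum, map_sum, ← Finset.sum_add_distrib]
    refine Finset.sum_congr rfl fun i _ => ?_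
    rw [hD, map_smul, hΓ]
  have h2 : LinearMap.trace C E g' =
      LinearMap.trace C E (Γ * g - g * Γ) + r (LinearMap.trace C E g) := by
    rw [LinearMap.trace_eq_matrix_trace C b, LinearMap.trace_eq_matrix_trace C b,
      LinearMap.trace_eq_matrix_trace C b]
    simp only [Matrix.trace, Matrix.diag, LinearMap.toMatrix_apply, map_sum]
    rw [← Finset.sum_add_distrib]
    refine Finset.sum_congr rfl fun i _ => ?_
    rw [hg, h1 (g (b i)), ← hΓ]
    simp only [map_add, map_sub, LinearMap.sub_apply, Module.End.mul_apply, Finsupp.add_apply,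
      Finsupp.sub_apply]
    have : b.repr (∑ j, r (b.repr (g (b i)) j) • b j) i = r (b.repr (g (b i)) i) := by
      exact congrFun (b.repr_sum_self (fun j => r (b.repr (g (b i)) j))) i
    rw [this]
    abel
  rw [h2, map_sub, LinearMap.trace_mul_comm C Γ g, sub_self, zero_add]

variable (C E) in
/-- The `C`-linear endomorphisms, inside the `ℝ`-linear ones. -/
def clin : Subalgebra ℝ (Module.End ℝ E) where
  carrier := {φ | ∀ (c : C) (e : E), φ (c • e) = c • φ e}
  mul_mem' := by
    intro φ ψ h h' c e
    rw [Module.End.mul_apply, h', h]; rfl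
  add_mem' := by
    intro φ ψ h h' c e
    rw [LinearMap.add_apply, h', h, ← smul_add]; rfl
  algebraMap_mem' := by
    intro r c e
    haveI : SMulCommClass ℝ C E := IsScalarTower.to_smulCommClass
    rw [Module.algebraMap_end_apply, Module.algebraMap_end_apply, smul_comm]

theorem exists_tr : ∃ t : Module.End ℝ E →ₗ[ℝ] C, ∀ g : E →ₗ[C] E,
    t (g.restrictScalars ℝ) = LinearMap.trace C E g := by
  haveI : SMulCommClass C ℝ E := (IsScalarTower.to_smulCommClass : SMulCommClass ℝ C E).symm
  let j : (E →ₗ[C] E) →ₗ[ℝ] (E →ₗ[ℝ] E) := LinearMap.restrictScalarsₗ ℝ C E E ℝ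
  have hj : LinearMap.ker j = ⊥ := LinearMap.ker_eq_bot.2 (LinearMap.restrictScalars_injective ℝ)
  obtain ⟨P, hP⟩ := LinearMap.exists_leftInverse_of_injective j hj
  refine ⟨(LinearMap.trace C E).restrictScalars ℝ ∘ₗ P, fun g => ?_⟩
  have : P (j g) = g := by
    rw [← LinearMap.comp_apply, hP]; rfl
  exact congrArg (LinearMap.trace C E) this

/-- Bundled `C`-linear version. -/
def toC (φ : Module.End ℝ E) (h : φ ∈ clin C E) : E →ₗ[C] E where
  toFun := φ
  map_add' := map_add φ
  map_smul' := h

theorem t_eq (t : Module.End ℝ E →ₗ[ℝ] C) (ht : ∀ g : E →ₗ[C] E,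
    t (g.restrictScalars ℝ) = LinearMap.trace C E g) (φ : Module.End ℝ E) (h : φ ∈ clin C E) :
    t φ = LinearMap.trace C E (toC φ h) := by
  rw [← ht]; rfl

theorem t_trR (t : Module.End ℝ E →ₗ[ℝ] C) (ht : ∀ g : E →ₗ[C] E,
    t (g.restrictScalars ℝ) = LinearMap.trace C E g) (φ : Module.End ℝ E) (h : φ ∈ clin C E) :
    trR C φ = t φ := by
  have hex : ∃ g : E →ₗ[C] E, ⇑g = ⇑φ := ⟨toC φ h, rfl⟩
  unfold trR
  rw [dif_pos hex, t_eq t ht φ h]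
  congr 1
  exact DFunLike.coe_injective hex.choose_spec

theorem t_comm (t : Module.End ℝ E →ₗ[ℝ] C) (ht : ∀ g : E →ₗ[C] E,
    t (g.restrictScalars ℝ) = LinearMap.trace C E g) (φ ψ : Module.End ℝ E) (h : φ ∈ clin C E)
    (h' : ψ ∈ clin C E) : t (φ * ψ) = t (ψ * φ) := by
  rw [t_eq t ht _ (mul_mem h h'), t_eq t ht _ (mul_mem h' h)]
  exact LinearMap.trace_mul_comm C (toC φ h) (toC ψ h')

theorem t_conn [Module.Finite C E] [Module.Free C E] (t : Module.End ℝ E →ₗ[ℝ] C)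
    (ht : ∀ g : E →ₗ[C] E, t (g.restrictScalars ℝ) = LinearMap.trace C E g)
    (r : Derivation ℝ C C)
    (D : Module.End ℝ E) (hD : ∀ (f : C) (e : E), D (f • e) = f • D e + r f • e)
    (φ : Module.End ℝ E) (h : φ ∈ clin C E) (h' : D * φ - φ * D ∈ clin C E) :
    t (D * φ - φ * D) = r (t φ) := by
  rw [t_eq t ht _ h, t_eq t ht _ h']
  exact trace_conn r D hD _ _ fun e => rfl

theorem comm_mem (r : Derivation ℝ C C)
    (D : Module.End ℝ E) (hD : ∀ (f : C) (e : E), D (f • e) = f • D e + r f • e)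
    (φ : Module.End ℝ E) (h : φ ∈ clin C E) : D * φ - φ * D ∈ clin C E := by
  intro c e
  simp only [LinearMap.sub_apply, Module.End.mul_apply, hD, map_add, h _ _, smul_sub]
  abel

theorem curv_mem {L : Type*} [LieRing L] [LieAlgebra ℝ L] (ρ : L →ₗ[ℝ] Derivation ℝ C C)
    (hρ : ∀ (a b : L) (f : C), ρ ⁅a, b⁆ f = ρ a (ρ b f) - ρ b (ρ a f))
    (D : L →ₗ[ℝ] Module.End ℝ E) (h : IsConn ρ D) (x y : L) : curv D x y ∈ clin C E := by
  intro c e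
  simp only [curv, LinearMap.sub_apply, Module.End.mul_apply, h _ _ _, map_add, smul_sub, hρ,
    sub_smul]
  abel

theorem diff_mem {L : Type*} [LieRing L] [LieAlgebra ℝ L] (ρ : L →ₗ[ℝ] Derivation ℝ C C)
    (D0 D1 : L →ₗ[ℝ] Module.End ℝ E) (h0 : IsConn ρ D0) (h1 : IsConn ρ D1) (x : L) :
    (D1 - D0) x ∈ clin C E := by
  intro c e
  simp only [LinearMap.sub_apply, h0 _ _ _, h1 _ _ _, smul_sub]
  abel

end LF

end TraceSide

section PolySide

open Polynomial

namespace LF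

section
variable {B : Type*} [Ring B] [Algebra ℝ B]

/-- Polynomials with all coefficients in a subalgebra. -/
def polyIn (A : Subalgebra ℝ B) : Subalgebra ℝ B[X] where
  carrier := {f | ∀ n, f.coeff n ∈ A}
  mul_mem' := by
    intro f g hf hg n
    rw [coeff_mul]
    exact sum_mem fun i _ => mul_mem (hf _) (hg _)
  add_mem' := by
    intro f g hf hg n
    rw [coeff_add]
    exact add_mem (hf _) (hg _)
  algebraMap_mem' := by
    intro r n
    rw [Polynomial.algebraMap_apply, coeff_C]
    split_ifs
    · exact A.algebraMap_mem r
    · exact zero_mem _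

theorem C_mem {A : Subalgebra ℝ B} {b : B} (h : b ∈ A) : (Polynomial.C b) ∈ polyIn A := by
  intro n
  rw [coeff_C]
  split_ifs
  · exact h
  · exact zero_mem _

theorem X_mem {A : Subalgebra ℝ B} : (X : B[X]) ∈ polyIn A := by
  intro n
  rw [coeff_X]
  split_ifs
  · exact one_mem _
  · exact zero_mem _

theorem derivative_mem {A : Subalgebra ℝ B} {f : B[X]} (h : f ∈ polyIn A) :
    derivative f ∈ polyIn A := by
  intro n
  rw [coeff_derivative]
  exact mul_mem (h _) (add_mem (natCast_mem _ n) (one_mem _))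

variable {V : Type*} [AddCommGroup V] [Module ℝ V] (t : B →ₗ[ℝ] V)

/-- Integral over the unit interval of the `t`-values. -/
noncomputable def intg : B[X] →ₗ[ℝ] V := Polynomial.lsum (fun k => ((k : ℝ) + 1)⁻¹ • t)

theorem intg_range (f : B[X]) (N : ℕ) (h : f.natDegree < N) :
    intg t f = ∑ k ∈ Finset.range N, ((k : ℝ) + 1)⁻¹ • t (f.coeff k) := by
  change f.sum (fun k => ((((k : ℝ) + 1)⁻¹ • t : B →ₗ[ℝ] V))) = _
  rw [Polynomial.sum_over_range' _ _ N h]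
  · rfl
  · intro n; simp

theorem intg_congr (f g : B[X]) (h : ∀ k, t (f.coeff k) = t (g.coeff k)) : intg t f = intg t g := by
  rw [intg_range t f (f.natDegree + g.natDegree + 1) (by omega),
    intg_range t g (f.natDegree + g.natDegree + 1) (by omega)]
  simp only [h]

theorem intg_comm (A : Subalgebra ℝ B) (ht : ∀ a ∈ A, ∀ b ∈ A, t (a * b) = t (b * a))
    (f g : B[X]) (hf : f ∈ polyIn A) (hg : g ∈ polyIn A) : intg t (f * g) = intg t (g * f) := by
  refine intg_congr t _ _ fun k => ?_
  rw [coeff_mul, coeff_mul, ← Finset.Nat.sum_antidiagonal_swap, map_sum, map_sum]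
  exact Finset.sum_congr rfl fun i _ => ht _ (hf _) _ (hg _)

/-- Evaluation at one. -/
noncomputable def ev1 : B[X] →+* B := eval₂RingHom' (RingHom.id B) 1 (fun _ => Commute.one_right _)

/-- Evaluation at zero. -/
noncomputable def ev0 : B[X] →+* B := eval₂RingHom' (RingHom.id B) 0 (fun _ => Commute.zero_right _)

theorem ev1_monomial (n : ℕ) (b : B) : ev1 (monomial n b) = b := by
  simp [ev1, eval₂RingHom']
theorem ev0_monomial (n : ℕ) (b : B) : ev0 (monomial n b) = if n = 0 then b else 0 := by
  cases n <;> simp [ev0, eval₂RingHom']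
@[simp] theorem ev1_C (b : B) : ev1 (Polynomial.C b) = b := ev1_monomial 0 b
@[simp] theorem ev0_C (b : B) : ev0 (Polynomial.C b) = b := ev0_monomial 0 b
@[simp] theorem ev1_X : ev1 (X : B[X]) = 1 := ev1_monomial 1 1
@[simp] theorem ev0_X : ev0 (X : B[X]) = 0 := by
  rw [← monomial_one_one_eq_X, ev0_monomial]; simp

theorem intg_derivative (f : B[X]) : intg t (derivative f) = t (ev1 f) - t (ev0 f) := by
  induction f using Polynomial.induction_on' with
  | add f g hf hg => simp only [map_add, hf, hg]; abel
  | monomial n b =>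
    rw [ev1_monomial, ev0_monomial, derivative_monomial]
    cases n with
    | zero => simp
    | succ m =>
      change (monomial (m + 1 - 1) _).sum (fun k => ((((k : ℝ) + 1)⁻¹ • t : B →ₗ[ℝ] V))) = _
      rw [Polynomial.sum_monomial_index _ _ (by simp)]
      have : b * ((m + 1 : ℕ) : B) = ((m : ℝ) + 1) • b := by
        rw [← nsmul_eq_mul', ← Nat.cast_smul_eq_nsmul ℝ]; push_cast; rfl
      have h0 : (m : ℝ) + 1 ≠ 0 := by positivity
      rw [this]
      simp [h0]

end
end LF
end PolySide

section Assembly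

open Polynomial

namespace LF

variable {L C E : Type*} [LieRing L] [LieAlgebra ℝ L] [CommRing C] [Algebra ℝ C]
  [AddCommGroup E] [Module ℝ E] [Module C E] [IsScalarTower ℝ C E]

/-- The polynomial family of connections. -/
noncomputable def DD (D0 D1 : L →ₗ[ℝ] Module.End ℝ E) (x : L) : (Module.End ℝ E)[X] :=
  Polynomial.C (D0 x) + X * Polynomial.C ((D1 - D0) x)

theorem DD_lin (D0 D1 : L →ₗ[ℝ] Module.End ℝ E) (r : ℝ) (x y : L) :
    DD D0 D1 (r • x + y) = r • DD D0 D1 x + DD D0 D1 y := by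
  have hC : ∀ b : Module.End ℝ E, Polynomial.C (r • b) = r • Polynomial.C b := fun b =>
    (smul_C r b).symm
  simp only [DD, map_add, map_smul, hC, mul_add, smul_add, mul_smul_comm]
  abel

theorem DD_add (D0 D1 : L →ₗ[ℝ] Module.End ℝ E) (x y : L) :
    DD D0 D1 (x + y) = DD D0 D1 x + DD D0 D1 y := by
  simpa using DD_lin D0 D1 1 x y

theorem DD_zero (D0 D1 : L →ₗ[ℝ] Module.End ℝ E) : DD D0 D1 0 = 0 := by simp [DD]

theorem DD_act_mem (ρ : L →ₗ[ℝ] Derivation ℝ C C)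
    (D0 D1 : L →ₗ[ℝ] Module.End ℝ E) (h0 : IsConn ρ D0) (h1 : IsConn ρ D1) (x : L)
    (f : (Module.End ℝ E)[X]) (hf : f ∈ polyIn (clin C E)) :
    DD D0 D1 x * f - f * DD D0 D1 x ∈ polyIn (clin C E) := by
  have e : DD D0 D1 x * f - f * DD D0 D1 x =
      (Polynomial.C (D0 x) * f - f * Polynomial.C (D0 x)) +
      ((X * Polynomial.C ((D1 - D0) x)) * f - f * (X * Polynomial.C ((D1 - D0) x))) := by
    unfold DD; noncomm_ring
  have hm : X * Polynomial.C ((D1 - D0) x) ∈ polyIn (clin C E) :=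
    mul_mem X_mem (C_mem (diff_mem ρ D0 D1 h0 h1 x))
  rw [e]
  refine add_mem (fun n => ?_) (sub_mem (mul_mem hm hf) (mul_mem hf hm))
  rw [coeff_sub, coeff_C_mul, coeff_mul_C]
  exact comm_mem (ρ x) (D0 x) (h0 x) _ (hf n)

theorem DD_curv_mem (ρ : L →ₗ[ℝ] Derivation ℝ C C)
    (hρ : ∀ (a b : L) (f : C), ρ ⁅a, b⁆ f = ρ a (ρ b f) - ρ b (ρ a f))
    (D0 D1 : L →ₗ[ℝ] Module.End ℝ E) (h0 : IsConn ρ D0) (h1 : IsConn ρ D1) (x y : L) :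
    DD D0 D1 x * DD D0 D1 y - DD D0 D1 y * DD D0 D1 x - DD D0 D1 ⁅x, y⁆ ∈ polyIn (clin C E) := by
  have hX : ∀ (b : Module.End ℝ E) (q : (Module.End ℝ E)[X]),
      Polynomial.C b * (X * q) = X * (Polynomial.C b * q) := fun b q => by
    rw [← mul_assoc, ← X_mul_C, mul_assoc]
  have e : DD D0 D1 x * DD D0 D1 y - DD D0 D1 y * DD D0 D1 x - DD D0 D1 ⁅x, y⁆ =
      Polynomial.C (curv D0 x y) +
      X * Polynomial.C ((D0 x * (D1 - D0) y - (D1 - D0) y * D0 x) -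
        (D0 y * (D1 - D0) x - (D1 - D0) x * D0 y) - (D1 - D0) ⁅x, y⁆) +
      X * (X * Polynomial.C ((D1 - D0) x * (D1 - D0) y - (D1 - D0) y * (D1 - D0) x)) := by
    unfold DD curv
    generalize (D1 - D0) x = u
    generalize (D1 - D0) y = v
    generalize (D1 - D0) ⁅x, y⁆ = w
    simp only [mul_add, add_mul, mul_sub, map_sub, map_mul, mul_assoc, hX]
    abel
  have hu := diff_mem ρ D0 D1 h0 h1
  rw [e]
  refine add_mem (add_mem (C_mem (curv_mem ρ hρ D0 h0 x y)) (mul_mem X_mem (C_mem ?_)))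
    (mul_mem X_mem (mul_mem X_mem (C_mem ?_)))
  · exact sub_mem (sub_mem (comm_mem (ρ x) _ (h0 x) _ (hu y)) (comm_mem (ρ y) _ (h0 y) _ (hu x)))
      (hu _)
  · exact sub_mem (mul_mem (hu _) (hu _)) (mul_mem (hu _) (hu _))

theorem lcurv_pow_mem (ρ : L →ₗ[ℝ] Derivation ℝ C C)
    (hρ : ∀ (a b : L) (f : C), ρ ⁅a, b⁆ f = ρ a (ρ b f) - ρ b (ρ a f))
    (D : L →ₗ[ℝ] Module.End ℝ E) (h : IsConn ρ D) (p : ℕ) (l : List L) :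
    (lcurv D ^ p) l ∈ clin C E := by
  have e : lcurv D = mp (clin C E).val.toRingHom
      (K2 fun x y => (⟨curv D x y, curv_mem ρ hρ D h x y⟩ : clin C E)) := ext' fun l => by
    match l with
    | [] => rfl
    | [x] => rfl
    | [x, y] => rfl
    | x :: y :: z :: l => rfl
  rw [e, ← mp_pow]
  exact Subtype.property _

theorem mp_K2 {S B : Type*} [Ring S] [Ring B] (f : S →+* B) (K : L → L → S)
    (D : L →ₗ[ℝ] Module.End ℝ E) (g : B →+* Module.End ℝ E)
    (h : ∀ x y, g (f (K x y)) = curv D x y) :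
    mp (g.comp f) (K2 K) = lcurv D := ext' fun l => by
  match l with
  | [] => exact map_zero (g.comp f)
  | [x] => exact map_zero (g.comp f)
  | [x, y] => exact h x y
  | x :: y :: z :: l => exact map_zero (g.comp f)

theorem main [Module.Finite C E] [Module.Free C E]
    (ρ : L →ₗ[ℝ] Derivation ℝ C C)
    (hρ : ∀ (a b : L) (f : C), ρ ⁅a, b⁆ f = ρ a (ρ b f) - ρ b (ρ a f))
    (D0 D1 : L →ₗ[ℝ] Module.End ℝ E) (h0 : IsConn ρ D0) (h1 : IsConn ρ D1) (q n : ℕ) :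
    ∃ η : AlternatingMap ℝ L C (Fin n), ∀ a : Fin (n + 1) → L,
      dRho ρ η a = trR C ((lcurv D1 ^ (q + 1)) (List.ofFn a)) -
        trR C ((lcurv D0 ^ (q + 1)) (List.ofFn a)) := by
  obtain ⟨t, ht⟩ := exists_tr (C := C) (E := E)
  let act : L → polyIn (clin C E) →+ polyIn (clin C E) := fun x =>
    AddMonoidHom.mk' (fun s => ⟨DD D0 D1 x * s - s * DD D0 D1 x,
      DD_act_mem ρ D0 D1 h0 h1 x s s.2⟩) (fun s s' => by
        apply Subtype.ext
        simp only [Subalgebra.coe_add]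
        noncomm_ring)
  have act_coe : ∀ x s, ((act x s : polyIn (clin C E)) : (Module.End ℝ E)[X]) =
    DD D0 D1 x * s - s * DD D0 D1 x := fun x s => rfl
  let K : L → L → polyIn (clin C E) := fun x y =>
    ⟨DD D0 D1 x * DD D0 D1 y - DD D0 D1 y * DD D0 D1 x - DD D0 D1 ⁅x, y⁆,
      DD_curv_mem ρ hρ D0 D1 h0 h1 x y⟩
  have K_coe : ∀ x y, ((K x y : polyIn (clin C E)) : (Module.End ℝ E)[X]) =
    DD D0 D1 x * DD D0 D1 y - DD D0 D1 y * DD D0 D1 x - DD D0 D1 ⁅x, y⁆ := fun x y => rfl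
  let Lam : L → polyIn (clin C E) := fun x =>
    ⟨Polynomial.C ((D1 - D0) x), C_mem (diff_mem ρ D0 D1 h0 h1 x)⟩
  have Lam_coe : ∀ x, ((Lam x : polyIn (clin C E)) : (Module.End ℝ E)[X]) =
    Polynomial.C ((D1 - D0) x) := fun x => rfl
  let der : polyIn (clin C E) →+ polyIn (clin C E) :=
    AddMonoidHom.mk' (fun s => ⟨derivative (s : (Module.End ℝ E)[X]), derivative_mem s.2⟩)
      (fun s s' => by
        apply Subtype.ext
        simp only [Subalgebra.coe_add, derivative_add])
  have der_coe : ∀ s, ((der s : polyIn (clin C E)) : (Module.End ℝ E)[X]) =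
    derivative (s : (Module.End ℝ E)[X]) := fun s => rfl
  have derDD : ∀ x, derivative (DD D0 D1 x) = Polynomial.C ((D1 - D0) x) := fun x => by
    simp [DD]
  let T : polyIn (clin C E) →ₗ[ℝ] C := (intg t).comp (polyIn (clin C E)).val.toLinearMap
  have T_coe : ∀ s, T s = intg t (s : (Module.End ℝ E)[X]) := fun s => rfl
  have tc : ∀ a ∈ clin C E, ∀ b ∈ clin C E, t (a * b) = t (b * a) := fun a ha b hb =>
    t_comm t ht a b ha hb
  obtain ⟨η, hη⟩ := transgr act
    (fun x a b => Subtype.ext (by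
      simp only [act_coe, Subalgebra.coe_add, Subalgebra.coe_mul]; noncomm_ring))
    K
    (fun x => Subtype.ext (by simp [K_coe, DD_zero]))
    (fun r x y z => Subtype.ext (by
      simp only [K_coe, Subalgebra.coe_add, Subalgebra.coe_smul, add_lie, smul_lie, DD_lin,
        add_mul, mul_add, smul_mul_assoc, mul_smul_comm, smul_sub]
      abel))
    (fun r x y z => Subtype.ext (by
      simp only [K_coe, Subalgebra.coe_add, Subalgebra.coe_smul, lie_add, lie_smul, DD_lin,
        add_mul, mul_add, smul_mul_assoc, mul_smul_comm, smul_sub]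
      abel))
    (fun x y z => Subtype.ext (by
      have hJ : DD D0 D1 ⁅x, ⁅y, z⁆⁆ = DD D0 D1 ⁅⁅x, y⁆, z⁆ + DD D0 D1 ⁅y, ⁅x, z⁆⁆ := by
        rw [← DD_add, leibniz_lie]
      simp only [K_coe, act_coe, Subalgebra.coe_sub, Subalgebra.coe_zero, hJ, mul_sub, sub_mul, mul_assoc]
      abel))
    Lam
    (fun r x y => Subtype.ext (by
      simp only [Lam_coe, Subalgebra.coe_add, Subalgebra.coe_smul, map_add, map_smul, smul_C]))
    der
    (fun a b => Subtype.ext (by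
      simp only [der_coe, Subalgebra.coe_add, Subalgebra.coe_mul, derivative_mul]))
    (fun x y => Subtype.ext (by
      simp only [der_coe, K_coe, act_coe, Lam_coe, Subalgebra.coe_sub, derivative_mul,
        derivative_sub, derDD]
      abel))
    (fun x => ((ρ x : Derivation ℝ C C) : C →ₗ[ℝ] C).toAddMonoidHom)
    T
    (fun a b => by
      simp only [T_coe, Subalgebra.coe_mul]
      exact intg_comm t (clin C E) tc _ _ a.2 b.2)
    (fun x a => by
      have hm : X * Polynomial.C ((D1 - D0) x) ∈ polyIn (clin C E) :=
        mul_mem X_mem (C_mem (diff_mem ρ D0 D1 h0 h1 x))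
      have e : DD D0 D1 x * (a : (Module.End ℝ E)[X]) - (a : (Module.End ℝ E)[X]) * DD D0 D1 x =
          (Polynomial.C (D0 x) * (a : (Module.End ℝ E)[X]) - (a : (Module.End ℝ E)[X]) * Polynomial.C (D0 x)) +
          ((X * Polynomial.C ((D1 - D0) x)) * (a : (Module.End ℝ E)[X]) -
            (a : (Module.End ℝ E)[X]) * (X * Polynomial.C ((D1 - D0) x))) := by
        unfold DD; noncomm_ring
      rw [T_coe, T_coe, act_coe, e, map_add, map_sub (intg t) (X * _ * _),
        intg_comm t (clin C E) tc _ _ hm a.2, sub_self, add_zero]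
      change _ = ρ x _
      rw [intg_range t _ (((Polynomial.C (D0 x) * (a : (Module.End ℝ E)[X]) -
          (a : (Module.End ℝ E)[X]) * Polynomial.C (D0 x))).natDegree + (a : (Module.End ℝ E)[X]).natDegree + 1) (by omega),
        intg_range t (a : (Module.End ℝ E)[X]) (((Polynomial.C (D0 x) * (a : (Module.End ℝ E)[X]) -
          (a : (Module.End ℝ E)[X]) * Polynomial.C (D0 x))).natDegree + (a : (Module.End ℝ E)[X]).natDegree + 1) (by omega),
        map_sum]
      refine Finset.sum_congr rfl fun k _ => ?_
      rw [coeff_sub, coeff_C_mul, coeff_mul_C, Derivation.map_smul]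
      congr 1
      exact t_conn t ht (ρ x) (D0 x) (h0 x) _ (a.2 k) (comm_mem (ρ x) (D0 x) (h0 x) _ (a.2 k)))
    q n
  refine ⟨η, fun a => (hη a).trans ?_⟩
  rw [T_coe, der_coe, intg_derivative]
  have e1 : mp (ev1.comp (polyIn (clin C E)).val.toRingHom) (K2 K) = lcurv D1 := by
    refine mp_K2 _ K D1 _ fun x y => ?_
    change ev1 (DD D0 D1 x * DD D0 D1 y - DD D0 D1 y * DD D0 D1 x - DD D0 D1 ⁅x, y⁆) = _
    have : ∀ x, ev1 (DD D0 D1 x) = D1 x := fun x => by simp [DD]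
    simp only [map_sub, map_mul, this]
    rfl
  have e0 : mp (ev0.comp (polyIn (clin C E)).val.toRingHom) (K2 K) = lcurv D0 := by
    refine mp_K2 _ K D0 _ fun x y => ?_
    change ev0 (DD D0 D1 x * DD D0 D1 y - DD D0 D1 y * DD D0 D1 x - DD D0 D1 ⁅x, y⁆) = _
    have : ∀ x, ev0 (DD D0 D1 x) = D0 x := fun x => by simp [DD]
    simp only [map_sub, map_mul, this]
    rfl
  rw [t_trR t ht _ (lcurv_pow_mem ρ hρ D1 h1 _ _), t_trR t ht _ (lcurv_pow_mem ρ hρ D0 h0 _ _),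
    ← e1, ← e0, ← mp_pow, ← mp_pow]
  rfl

end LF
end Assembly

/-- `ch_p(∇¹) − ch_p(∇⁰)` is `d_ρ`-exact, so the Chern character class
does not depend on the choice of the ℝ-linear connection. -/
theorem stmt7 {L : Type*} {C : Type*} {E : Type*}
    [LieRing L] [LieAlgebra ℝ L] [CommRing C] [Algebra ℝ C] [Module C L]
    [AddCommGroup E] [Module ℝ E] [Module C E] [IsScalarTower ℝ C E]
    [Module.Finite C E] [Module.Free C E]
    (ρ : L →ₗ[ℝ] Derivation ℝ C C)
    (hρ : ∀ (a b : L) (f : C), ρ ⁅a, b⁆ f = ρ a (ρ b f) - ρ b (ρ a f))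
    (hLeib : ∀ (a b : L) (f : C), ⁅a, f • b⁆ = f • ⁅a, b⁆ + ρ a f • b)
    (D0 D1 : L →ₗ[ℝ] Module.End ℝ E) (h0 : IsConn ρ D0) (h1 : IsConn ρ D1)
    (p : ℕ) (hp : 1 ≤ p) :
    ∃ η : AlternatingMap ℝ L C (Fin (2 * p - 1)),
      ∀ a : Fin (2 * p) → L,
        dRho ρ (⇑η) (fun i => a (Fin.cast (by omega) i))
          = chp C D1 p a - chp C D0 p a := by
  obtain ⟨q, rfl⟩ : ∃ q, p = q + 1 := ⟨p - 1, by omega⟩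
  obtain ⟨η, hη⟩ := LF.main ρ hρ D0 D1 h0 h1 q (2 * (q + 1) - 1)
  refine ⟨η, fun a => ?_⟩
  rw [hη]
  unfold chp
  rw [LF.wpow_ofFn, LF.wpow_ofFn]
  have hl : ∀ (m k : ℕ) (h : m = k) (b : Fin k → L),
      List.ofFn (fun i : Fin m => b (Fin.cast h i)) = List.ofFn b := by
    intro m k h b
    subst h
    rfl
  rw [hl]
end

section
/- Let ∇⁰, ∇¹ : L → End_ℝ(E) be ℝ-linear maps, λ = ∇¹ − ∇⁰, and for t ∈ ℝ set ∇^t = ∇⁰ + t•λ. Then for all a,b ∈ L: R^{∇^t}(a,b) = (1−t)·R^{∇⁰}(a,b) + t·R^{∇¹}(a,b) + (t²−t)·[λ(a), λ(b)], where [·,·] is the commutator in End_ℝ(E). -/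
open Module

/-- `R^{∇^t} = (1−t)·R^{∇⁰} + t·R^{∇¹} + (t²−t)·[λ,λ]` where
`λ = ∇¹ − ∇⁰` and `∇^t = ∇⁰ + t•λ`. -/
theorem stmt9 {L : Type*} {E : Type*} [LieRing L] [LieAlgebra ℝ L]
    [AddCommGroup E] [Module ℝ E]
    (D0 D1 : L →ₗ[ℝ] Module.End ℝ E) (t : ℝ) (a b : L) :
    curv (D0 + t • (D1 - D0)) a b
      = (1 - t) • curv D0 a b + t • curv D1 a b
        + (t ^ 2 - t) • ((D1 - D0) a * (D1 - D0) b - (D1 - D0) b * (D1 - D0) a) := by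
  simp only [curv, LinearMap.add_apply, LinearMap.smul_apply, LinearMap.sub_apply,
    mul_add, add_mul, mul_sub, sub_mul, smul_mul_assoc, mul_smul_comm, smul_sub, smul_smul]
  module
end

section
/- For every p ≥ 1: ch_p(∇^h) = (−1)^p · ch_p(∇). -/
open Module

/-- Block indexing `(i, j) ↦ 2 i + j`. -/
def blk (p : ℕ) : Fin p × Fin 2 ≃ Fin (2 * p) :=
  finProdFinEquiv.trans (finCongr (mul_comm p 2))

/-- Signed sum of ordered products over all permutations. -/
noncomputable def sgnSum {L E : Type*} [AddCommGroup E] [Module ℝ E]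
    (R : (Fin 2 → L) → Module.End ℝ E) (p : ℕ) (a : Fin (2 * p) → L) : Module.End ℝ E :=
  ∑ τ : Equiv.Perm (Fin (2 * p)), (Equiv.Perm.sign τ : ℤ) •
    (List.ofFn (fun i : Fin p => R (fun j => a (τ (blk p (i, j)))))).prod

theorem wedge_sgnSum {L E : Type*} [AddCommGroup E] [Module ℝ E]
    (R : (Fin 2 → L) → Module.End ℝ E) (p : ℕ) (a : Fin (2 + 2 * p) → L) :
    wedge R (sgnSum R p) a = (2 : ℝ)⁻¹ •
      ∑ τ : Equiv.Perm (Fin (2 + 2 * p)), (Equiv.Perm.sign τ : ℤ) •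
        (R (fun j => a (τ (Fin.castAdd (2 * p) j))) *
          (List.ofFn (fun i : Fin p =>
            R (fun j => a (τ (Fin.natAdd 2 (blk p (i, j))))))).prod) := by
  unfold wedge sgnSum
  simp_rw [Finset.mul_sum, Finset.smul_sum]
  rw [Finset.sum_comm]
  have key : ∀ σ : Equiv.Perm (Fin (2 * p)),
      ∑ τ : Equiv.Perm (Fin (2 + 2 * p)), (((Nat.factorial 2 : ℕ) : ℝ) * ((2 * p).factorial : ℕ))⁻¹ •
        ((Equiv.Perm.sign τ : ℤ) •
        (R (fun j => a (τ (Fin.castAdd (2 * p) j))) *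
          ((Equiv.Perm.sign σ : ℤ) • (List.ofFn (fun i : Fin p =>
            R (fun j => a (τ (Fin.natAdd 2 (σ (blk p (i, j)))))))).prod))) =
      (((Nat.factorial 2 : ℕ) : ℝ) * ((2 * p).factorial : ℕ))⁻¹ •
       ∑ τ : Equiv.Perm (Fin (2 + 2 * p)), 
        ((Equiv.Perm.sign τ : ℤ) •
        (R (fun j => a (τ (Fin.castAdd (2 * p) j))) *
          (List.ofFn (fun i : Fin p =>
            R (fun j => a (τ (Fin.natAdd 2 (blk p (i, j))))))).prod)) := by
    intro σ
    rw [← Finset.smul_sum]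
    congr 1
    let s : Equiv.Perm (Fin (2 + 2 * p)) :=
      finSumFinEquiv.permCongr (Equiv.Perm.sumCongr 1 σ)
    have hs : Equiv.Perm.sign s = Equiv.Perm.sign σ := by
      simp only [s, Equiv.Perm.sign_permCongr, Equiv.Perm.sign_sumCongr, map_one, one_mul]
    have h1 : ∀ j, s (Fin.castAdd (2 * p) j) = Fin.castAdd (2 * p) j := by
      intro j; simp [s, Equiv.permCongr_apply]
    have h2 : ∀ j, s (Fin.natAdd 2 j) = Fin.natAdd 2 (σ j) := by
      intro j; simp [s, Equiv.permCongr_apply]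
    symm
    rw [← Equiv.sum_comp (Equiv.mulRight s)]
    refine Finset.sum_congr rfl fun τ _ => ?_
    simp only [Equiv.coe_mulRight, Equiv.Perm.mul_apply, h1, h2, Equiv.Perm.sign_mul, hs,
      Units.val_mul, mul_smul, mul_smul_comm]
  rw [Finset.sum_congr rfl fun σ _ => key σ]
  rw [Finset.sum_const, Finset.card_univ, Fintype.card_perm, Fintype.card_fin,
    ← Nat.cast_smul_eq_nsmul ℝ, smul_smul, ← Finset.smul_sum]
  congr 1
  have : ((2 * p).factorial : ℝ) ≠ 0 := by exact_mod_cast Nat.factorial_ne_zero _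
  simp only [Nat.factorial_two]
  push_cast
  field_simp

theorem blk_zero (p : ℕ) (j : Fin 2) :
    blk (p + 1) (0, j) = Fin.cast (by omega) (Fin.castAdd (2 * p) j) := by
  ext; simp [blk]

theorem blk_succ (p : ℕ) (i : Fin p) (j : Fin 2) :
    blk (p + 1) (i.succ, j) = Fin.cast (by omega) (Fin.natAdd 2 (blk p (i, j))) := by
  ext; simp [blk]; ring

theorem wpow_eq {L E : Type*} [AddCommGroup E] [Module ℝ E]
    (R : (Fin 2 → L) → Module.End ℝ E) (p : ℕ) (a : Fin (2 * p) → L) :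
    wpow R p a = ((2 : ℝ) ^ p)⁻¹ • sgnSum R p a := by
  induction p with
  | zero => 
    have : (Finset.univ : Finset (Equiv.Perm (Fin (2 * 0)))) = {1} := by
      have : Subsingleton (Fin (2 * 0)) := inferInstanceAs (Subsingleton (Fin 0))
      ext x
      simp only [Finset.mem_univ, Finset.mem_singleton, true_iff]
      exact Subsingleton.elim _ _
    simp [wpow, sgnSum, this]
  | succ p ih =>
    have hw : wpow R p = fun a => ((2 : ℝ) ^ p)⁻¹ • sgnSum R p a := funext ih
    have hc : 2 + 2 * p = 2 * (p + 1) := by omega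
    have hl : ∀ (c : ℝ) (b : Fin (2 + 2 * p) → L),
        wedge R (fun a => c • sgnSum R p a) b = c • wedge R (sgnSum R p) b := by
      intro c b
      unfold wedge
      rw [smul_comm, Finset.smul_sum (r := c)]
      congr 1
      refine Finset.sum_congr rfl fun τ _ => ?_
      rw [mul_smul_comm, smul_comm]
    simp only [wpow]
    rw [hw, hl, wedge_sgnSum, smul_smul, pow_succ, mul_inv]
    congr 1
    unfold sgnSum
    rw [← Equiv.sum_comp (Equiv.permCongr (finCongr hc))]
    refine Finset.sum_congr rfl fun τ _ => ?_
    rw [Equiv.Perm.sign_permCongr, List.ofFn_succ, List.prod_cons]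
    simp [blk_zero, blk_succ, Equiv.permCongr_apply]

/-- Reversal of the blocks. -/
def blkRev (p : ℕ) : Equiv.Perm (Fin (2 * p)) :=
  (blk p).permCongr (Equiv.prodCongrLeft fun _ : Fin 2 => Fin.revPerm)

theorem sign_blkRev (p : ℕ) : Equiv.Perm.sign (blkRev p) = 1 := by
  unfold blkRev
  rw [Equiv.Perm.sign_permCongr, Equiv.Perm.sign_prodCongrLeft]
  simp

theorem blkRev_apply (p : ℕ) (i : Fin p) (j : Fin 2) :
    blkRev p (blk p (i, j)) = blk p (i.rev, j) := by
  simp [blkRev, Equiv.permCongr_apply]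

theorem sgnSum_rev {L E : Type*} [AddCommGroup E] [Module ℝ E]
    (R : (Fin 2 → L) → Module.End ℝ E) (p : ℕ) (a : Fin (2 * p) → L) :
    sgnSum R p a = ∑ τ : Equiv.Perm (Fin (2 * p)), (Equiv.Perm.sign τ : ℤ) •
    (List.ofFn (fun i : Fin p => R (fun j => a (τ (blk p (i.rev, j)))))).prod := by
  unfold sgnSum
  rw [← Equiv.sum_comp (Equiv.mulRight (blkRev p))]
  refine Finset.sum_congr rfl fun τ _ => ?_
  simp [sign_blkRev, blkRev_apply]

theorem adj_prod {C E : Type*} [CommRing C] [AddCommGroup E] [Module ℝ E] [Module C E]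
    (h : E →ₗ[C] E →ₗ[C] C) (p : ℕ) (f g : Fin p → Module.End ℝ E)
    (hfg : ∀ i s t, h (f i s) t = - h s (g i t)) (s t : E) :
    h ((List.ofFn f).prod s) t =
      (-1 : ℤ) ^ p • h s ((List.ofFn fun i => g i.rev).prod t) := by
  induction p generalizing s t with
  | zero => simp
  | succ p ih =>
    rw [List.ofFn_succ, List.prod_cons, List.ofFn_succ', List.concat_eq_append, List.prod_append]
    simp only [Module.End.mul_apply, List.prod_singleton, Fin.rev_castSucc, Fin.rev_last]
    rw [hfg, ih (fun i => f i.succ) (fun i => g i.succ) (fun i => hfg i.succ), pow_succ]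
    simp

theorem adj_wpow {L C E : Type*} [CommRing C] [Algebra ℝ C] [AddCommGroup E] [Module ℝ E]
    [Module C E] [IsScalarTower ℝ C E]
    (h : E →ₗ[C] E →ₗ[C] C) (R Q : (Fin 2 → L) → Module.End ℝ E)
    (hRQ : ∀ v s t, h (R v s) t = - h s (Q v t)) (p : ℕ) (a : Fin (2 * p) → L) (s t : E) :
    h (wpow R p a s) t = (-1 : ℤ) ^ p • h s (wpow Q p a t) := by
  have hs1 : ∀ (c : ℝ) (x y : E), h (c • x) y = c • h x y := by
    intro c x y
    rw [← algebraMap_smul C c x, map_smul, LinearMap.smul_apply, algebraMap_smul]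
  have hs2 : ∀ (c : ℝ) (x y : E), h x (c • y) = c • h x y := by
    intro c x y
    rw [← algebraMap_smul C c y, map_smul, algebraMap_smul]
  rw [wpow_eq, wpow_eq, sgnSum_rev Q, sgnSum]
  simp only [LinearMap.smul_apply, LinearMap.sum_apply, hs1, hs2, map_sum, map_zsmul]
  rw [smul_comm]
  congr 1
  rw [Finset.smul_sum]
  refine Finset.sum_congr rfl fun τ _ => ?_
  rw [adj_prod h p _ (fun i => Q (fun j => a (τ (blk p (i, j))))) (fun i => hRQ _), smul_comm]

theorem clin_wpow {L C E : Type*} [CommRing C] [Algebra ℝ C] [AddCommGroup E] [Module ℝ E]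
    [Module C E] [IsScalarTower ℝ C E] (R : (Fin 2 → L) → Module.End ℝ E)
    (hR : ∀ v (c : C) (e : E), R v (c • e) = c • R v e) (p : ℕ) (a : Fin (2 * p) → L)
    (c : C) (e : E) : wpow R p a (c • e) = c • wpow R p a e := by
  have : SMulCommClass ℝ C E := IsScalarTower.to_smulCommClass
  induction p generalizing c e with
  | zero => simp [wpow]
  | succ p ih =>
    simp only [wpow, wedge, LinearMap.smul_apply, LinearMap.sum_apply, Module.End.mul_apply,
      ih, hR]
    rw [smul_comm c, Finset.smul_sum (r := c)]
    congr 1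
    refine Finset.sum_congr rfl fun τ _ => ?_
    rw [smul_comm]

theorem trR_eq {C E : Type*} [CommRing C] [AddCommGroup E] [Module ℝ E] [Module C E]
    (A : E →ₗ[ℝ] E) (g : E →ₗ[C] E) (hg : ∀ e, g e = A e) :
    trR C A = LinearMap.trace C E g := by
  have hx : ∃ g : E →ₗ[C] E, ⇑g = ⇑A := ⟨g, funext hg⟩
  unfold trR
  rw [dif_pos hx]
  congr 1
  ext e
  rw [hx.choose_spec, hg]

theorem trace_adj {C E : Type*} [CommRing C] [AddCommGroup E] [Module C E]
    [Module.Finite C E] [Module.Free C E] (h : E →ₗ[C] E →ₗ[C] C)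
    (hnd : Function.Bijective (⇑h)) (A B : E →ₗ[C] E)
    (hAB : ∀ s t, h (A s) t = h s (B t)) :
    LinearMap.trace C E A = LinearMap.trace C E B := by
  let e : E ≃ₗ[C] Module.Dual C E := LinearEquiv.ofBijective h hnd
  rw [← LinearMap.trace_transpose' B, ← LinearMap.trace_conj' A e]
  congr 1
  ext φ t
  obtain ⟨s, rfl⟩ := e.surjective φ
  simpa [e, LinearEquiv.conj_apply, Module.Dual.transpose] using hAB s t

theorem curv_clin {L C E : Type*} [LieRing L] [LieAlgebra ℝ L] [CommRing C] [Algebra ℝ C]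
    [AddCommGroup E] [Module ℝ E] [Module C E]
    (ρ : L →ₗ[ℝ] Derivation ℝ C C)
    (hρ : ∀ (a b : L) (f : C), ρ ⁅a, b⁆ f = ρ a (ρ b f) - ρ b (ρ a f))
    (D : L →ₗ[ℝ] Module.End ℝ E) (hD : IsConn ρ D) (v : Fin 2 → L) (c : C) (e : E) :
    curv2 D v (c • e) = c • curv2 D v e := by
  simp only [curv2, curv, LinearMap.sub_apply, Module.End.mul_apply, hD _ _ _, map_add, hρ]
  module

/-- `ch_p(∇^h) = (−1)^p · ch_p(∇)`. -/
theorem stmt12 {L : Type*} {C : Type*} {E : Type*}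
    [LieRing L] [LieAlgebra ℝ L] [CommRing C] [Algebra ℝ C] [Module C L]
    [AddCommGroup E] [Module ℝ E] [Module C E] [IsScalarTower ℝ C E]
    [Module.Finite C E] [Module.Free C E]
    (ρ : L →ₗ[ℝ] Derivation ℝ C C)
    (hρ : ∀ (a b : L) (f : C), ρ ⁅a, b⁆ f = ρ a (ρ b f) - ρ b (ρ a f))
    (hLeib : ∀ (a b : L) (f : C), ⁅a, f • b⁆ = f • ⁅a, b⁆ + ρ a f • b)
    (h : E →ₗ[C] E →ₗ[C] C) (hsymm : ∀ s t : E, h s t = h t s)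
    (hnd : Function.Bijective (⇑h))
    (D Dh : L →ₗ[ℝ] Module.End ℝ E) (hD : IsConn ρ D) (hDh : IsConn ρ Dh)
    (hadj : ∀ (a : L) (s t : E), ρ a (h s t) = h (D a s) t + h s (Dh a t))
    (p : ℕ) (hp : 1 ≤ p) :
    ∀ v : Fin (2 * p) → L, chp C Dh p v = (-1 : ℤ) ^ p • chp C D p v := by
  intro v
  have hR : ∀ (w : Fin 2 → L) (s t : E), h (curv2 D w s) t = - h s (curv2 Dh w t) := by
    intro w s t
    have e1 := congrArg (ρ (w 0)) (hadj (w 1) s t)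
    have e2 := congrArg (ρ (w 1)) (hadj (w 0) s t)
    have e3 := hadj ⁅w 0, w 1⁆ s t
    rw [hρ] at e3
    simp only [map_add, hadj] at e1 e2 e3
    simp only [curv2, curv, LinearMap.sub_apply, Module.End.mul_apply, map_sub]
    linear_combination e3 - e1 + e2
  have c1 := clin_wpow (curv2 D) (curv_clin ρ hρ D hD) p v
  have c2 := clin_wpow (curv2 Dh) (curv_clin ρ hρ Dh hDh) p v
  let g : E →ₗ[C] E := { toFun := wpow (curv2 D) p v, map_add' := map_add _, map_smul' := c1 }
  let gh : E →ₗ[C] E := { toFun := wpow (curv2 Dh) p v, map_add' := map_add _, map_smul' := c2 }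
  have ht : LinearMap.trace C E g = LinearMap.trace C E ((-1 : ℤ) ^ p • gh) := by
    refine trace_adj h hnd _ _ fun s t => ?_
    rw [LinearMap.smul_apply, map_zsmul]
    exact adj_wpow h _ _ hR p v s t
  unfold chp
  rw [trR_eq _ g fun _ => rfl, trR_eq _ gh fun _ => rfl, ht, map_zsmul, smul_smul, ← mul_pow]
  simp
end

section
/- Let ∇⁰, ∇¹ be ℝ-linear connections of L on E with h-adjoint connections ∇⁰ʰ, ∇¹ʰ. Then for every p ≥ 1: cs_p(∇⁰ʰ, ∇¹ʰ) = (−1)^p · cs_p(∇⁰, ∇¹). -/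
open Module

namespace CSAux

set_option linter.unusedSectionVars false

section forms
variable {L E : Type*} [AddCommGroup E] [Module ℝ E]

/-- A permutation of `Fin n` extended to `Fin (m+n)` acting on the last `n` entries. -/
noncomputable def extPerm (m : ℕ) {n : ℕ} (σ : Equiv.Perm (Fin n)) : Equiv.Perm (Fin (m + n)) :=
  finSumFinEquiv.permCongr (Equiv.Perm.sumCongr 1 σ)

lemma sign_extPerm (m : ℕ) {n : ℕ} (σ : Equiv.Perm (Fin n)) :
    Equiv.Perm.sign (extPerm m σ) = Equiv.Perm.sign σ := by
  simp [extPerm]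

lemma extPerm_castAdd (m : ℕ) {n : ℕ} (σ : Equiv.Perm (Fin n)) (i : Fin m) :
    extPerm m σ (Fin.castAdd n i) = Fin.castAdd n i := by
  simp [extPerm, Equiv.permCongr_apply]

lemma extPerm_natAdd (m : ℕ) {n : ℕ} (σ : Equiv.Perm (Fin n)) (i : Fin n) :
    extPerm m σ (Fin.natAdd m i) = Fin.natAdd m (σ i) := by
  simp [extPerm, Equiv.permCongr_apply]

lemma wedge_alt {m n : ℕ} (ω : (Fin m → L) → Module.End ℝ E)
    (η G : (Fin n → L) → Module.End ℝ E) (c : ℝ)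
    (hη : ∀ b, η b = c • ∑ σ : Equiv.Perm (Fin n), ((Equiv.Perm.sign σ : ℤ) • G (fun j => b (σ j))))
    (a : Fin (m + n) → L) :
    wedge ω η a = ((m.factorial : ℝ)⁻¹ * c) • ∑ τ : Equiv.Perm (Fin (m + n)),
      ((Equiv.Perm.sign τ : ℤ) •
      (ω (fun i => a (τ (Fin.castAdd n i))) * G (fun j => a (τ (Fin.natAdd m j))))) := by
  have key : ∀ σ : Equiv.Perm (Fin n),
      ∑ τ : Equiv.Perm (Fin (m + n)), ((Equiv.Perm.sign τ : ℤ) •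
        (ω (fun i => a (τ (Fin.castAdd n i))) *
          ((Equiv.Perm.sign σ : ℤ) • G (fun j => a (τ (Fin.natAdd m (σ j))))))) =
      ∑ τ : Equiv.Perm (Fin (m + n)), ((Equiv.Perm.sign τ : ℤ) •
      (ω (fun i => a (τ (Fin.castAdd n i))) * G (fun j => a (τ (Fin.natAdd m j))))) := by
    intro σ
    refine Fintype.sum_equiv (Equiv.mulRight (extPerm m σ)) _ _ ?_
    intro τ
    simp only [Equiv.coe_mulRight, Equiv.Perm.mul_apply, extPerm_castAdd, extPerm_natAdd,
      Equiv.Perm.sign_mul, sign_extPerm, mul_smul_comm, smul_smul, Units.val_mul]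
  have hf : (n.factorial : ℝ) ≠ 0 := by positivity
  unfold wedge
  simp only [hη, mul_smul_comm, smul_comm _ c, Finset.mul_sum]
  rw [← Finset.smul_sum]
  simp only [Finset.smul_sum (s := (Finset.univ : Finset (Equiv.Perm (Fin n))))]
  rw [Finset.sum_comm]
  simp only [mul_smul_comm] at key
  rw [Finset.sum_congr rfl (fun σ _ => key σ)]
  rw [Finset.sum_const, Finset.card_univ, Fintype.card_perm, Fintype.card_fin,
    ← Nat.cast_smul_eq_nsmul ℝ, smul_smul, smul_smul]
  congr 1
  field_simp

/-- position of the `j`-th entry of the `i`-th block. -/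
def pos {n : ℕ} (x : Fin n × Fin 2) : Fin (2 * n) := ⟨2 * x.1 + x.2, by omega⟩

/-- blockwise product -/
def P (R : (Fin 2 → L) → Module.End ℝ E) (n : ℕ) (a : Fin n × Fin 2 → L) : Module.End ℝ E :=
  (List.ofFn (fun i => R (fun j => a (i, j)))).prod

lemma wpow_eq (n : ℕ) : ∃ c : ℝ, ∀ (R : (Fin 2 → L) → Module.End ℝ E) (a : Fin (2 * n) → L),
    wpow R n a = c • ∑ σ : Equiv.Perm (Fin (2 * n)), ((Equiv.Perm.sign σ : ℤ) •
      P R n (fun x => a (σ (pos x)))) := by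
  induction n with
  | zero =>
    refine ⟨1, fun R a => ?_⟩
    have : Subsingleton (Equiv.Perm (Fin (2 * 0))) := by
      rw [Nat.mul_zero]; infer_instance
    have hu : (Finset.univ : Finset (Equiv.Perm (Fin (2 * 0)))) = {1} := by
      ext x; simp [Subsingleton.elim x 1]
    rw [hu]
    simp [wpow, P]
  | succ n ih =>
    obtain ⟨c, hc⟩ := ih
    refine ⟨((2).factorial : ℝ)⁻¹ * c, fun R a => ?_⟩
    have := wedge_alt R (wpow R n) (fun b => P R n (fun x => b (pos x))) c (hc R)
      (fun i => a (Fin.cast (by omega) i))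
    show wedge R (wpow R n) (fun i => a (Fin.cast (by omega) i)) = _
    rw [this]
    congr 1
    refine Fintype.sum_equiv (finCongr (by omega : 2 + 2 * n = 2 * (n + 1))).permCongr _ _ ?_
    intro τ
    rw [Equiv.Perm.sign_permCongr]
    congr 1
    unfold P
    rw [List.ofFn_succ, List.prod_cons]
    congr 1
    · congr 1
      funext j
      simp only [Equiv.permCongr_apply]
      congr 3
      ext; simp [pos]
    · congr 3
      funext i
      congr 1
      funext j
      simp only [Equiv.permCongr_apply]
      congr 3
      ext; simp [pos]; omega

/-- `pos` as an equivalence. -/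
noncomputable def posEquiv (n : ℕ) : Fin n × Fin 2 ≃ Fin (2 * n) :=
  Equiv.ofBijective pos (by
    constructor
    · rintro ⟨i, j⟩ ⟨k, l⟩ hh
      simp only [pos, Fin.mk.injEq] at hh
      ext <;> simp <;> omega
    · intro k
      refine ⟨(⟨k / 2, by omega⟩, ⟨k % 2, by omega⟩), ?_⟩
      ext; simp [pos]; omega)

/-- block reversal -/
noncomputable def blockRev (n : ℕ) : Equiv.Perm (Fin (2 * n)) :=
  (posEquiv n).permCongr (Equiv.prodCongrLeft (fun _ : Fin 2 => (Fin.revPerm : Equiv.Perm (Fin n))))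

lemma sign_blockRev (n : ℕ) : Equiv.Perm.sign (blockRev n) = 1 := by
  simp [blockRev, Equiv.Perm.sign_permCongr, Equiv.Perm.sign_prodCongrLeft, Int.units_sq]

lemma blockRev_pos (n : ℕ) (x : Fin n × Fin 2) : blockRev n (pos x) = pos (x.1.rev, x.2) := by
  have h1 : ∀ y, pos y = posEquiv n y := fun y => rfl
  rw [h1, h1, blockRev, Equiv.permCongr_apply, Equiv.symm_apply_apply]
  rfl

lemma cs_eq (n : ℕ) : ∃ c : ℝ, ∀ (l : L → Module.End ℝ E) (R : (Fin 2 → L) → Module.End ℝ E)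
    (a : Fin (1 + 2 * n) → L),
    wedge (fun v : Fin 1 → L => l (v 0)) (wpow R n) a =
      c • ∑ τ : Equiv.Perm (Fin (1 + 2 * n)), ((Equiv.Perm.sign τ : ℤ) •
      (l (a (τ (Fin.castAdd (2 * n) 0))) * P R n (fun x => a (τ (Fin.natAdd 1 (pos x)))))) := by
  obtain ⟨c, hc⟩ := wpow_eq (L := L) (E := E) n
  exact ⟨_, fun l R a => wedge_alt _ (wpow R n) (fun b => P R n (fun x => b (pos x))) c (hc R) a⟩

end forms

section traces
variable {C E : Type*} [CommRing C] [Algebra ℝ C]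
    [AddCommGroup E] [Module ℝ E] [Module C E] [IsScalarTower ℝ C E]

/-- `e` is `C`-linear. -/
def CL (C : Type*) {E : Type*} [CommRing C] [AddCommGroup E]
    [Module ℝ E] [Module C E] (e : E →ₗ[ℝ] E) : Prop := ∃ g : E →ₗ[C] E, ⇑g = ⇑e

lemma trR_eq {e : E →ₗ[ℝ] E} (g : E →ₗ[C] E) (hg : ⇑g = ⇑e) : trR C e = LinearMap.trace C E g := by
  have hh : ∃ g : E →ₗ[C] E, ⇑g = ⇑e := ⟨g, hg⟩
  unfold trR
  rw [dif_pos hh]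
  congr 1
  exact DFunLike.coe_injective (hh.choose_spec.trans hg.symm)

lemma CL.mul {A B : Module.End ℝ E} (hA : CL C A) (hB : CL C B) : CL C (A * B) := by
  obtain ⟨f, hf⟩ := hA
  obtain ⟨g, hg⟩ := hB
  exact ⟨f * g, by funext x; simp [hf, hg]⟩

lemma trR_mul_comm {A B : Module.End ℝ E} (hA : CL C A) (hB : CL C B) :
    trR C (A * B) = trR C (B * A) := by
  obtain ⟨f, hf⟩ := hA
  obtain ⟨g, hg⟩ := hB
  rw [trR_eq (f * g) (by funext x; simp [hf, hg]), trR_eq (g * f) (by funext x; simp [hf, hg]),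
    LinearMap.trace_mul_comm]

lemma trR_smul_sum {ι : Type*} (s : Finset ι) (c : ℝ) (z : ι → ℤ) (A : ι → Module.End ℝ E)
    (hA : ∀ i, CL C (A i)) :
    trR C (c • ∑ i ∈ s, z i • A i) = c • ∑ i ∈ s, z i • trR C (A i) := by
  choose g hg using hA
  rw [trR_eq (algebraMap ℝ C c • ∑ i ∈ s, z i • g i)]
  · rw [map_smul, algebraMap_smul, map_sum]
    congr 1
    refine Finset.sum_congr rfl fun i _ => ?_
    rw [map_zsmul, trR_eq (g i) (hg i)]
  · funext x
    simp [LinearMap.sum_apply, hg]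

variable (h : E →ₗ[C] E →ₗ[C] C)

/-- adjoint pairs -/
def Adj (A B : Module.End ℝ E) : Prop := ∀ s t, h (A s) t = h s (B t)

variable {h}

lemma Adj.symm (hsymm : ∀ s t : E, h s t = h t s) {A B : Module.End ℝ E} (H : Adj h A B) :
    Adj h B A := fun s t => by rw [hsymm, ← H, hsymm]

lemma Adj.mul {A B A' B' : Module.End ℝ E} (H : Adj h A B) (H' : Adj h A' B') :
    Adj h (A * A') (B' * B) := fun s t => by simp [H (A' s) t, H' s]

lemma Adj.cl (hnd : Function.Bijective (⇑h)) {A B : Module.End ℝ E} (H : Adj h A B) : CL C A := by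
  refine ⟨{ toFun := A, map_add' := map_add A, map_smul' := ?_ }, rfl⟩
  intro f s
  apply hnd.1
  ext t
  simp [H _ t]

lemma Adj.tr [Module.Finite C E] [Module.Free C E]
    (hsymm : ∀ s t : E, h s t = h t s) (hnd : Function.Bijective (⇑h))
    {A B : Module.End ℝ E} (H : Adj h A B) : trR C A = trR C B := by
  obtain ⟨f, hf⟩ := H.cl hnd
  obtain ⟨g, hg⟩ := (H.symm hsymm).cl hnd
  rw [trR_eq f hf, trR_eq g hg]
  let e : E ≃ₗ[C] Module.Dual C E := LinearEquiv.ofBijective h hnd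
  have : e.conj g = Module.Dual.transpose f := by
    ext φ s
    obtain ⟨t, rfl⟩ := e.surjective φ
    simp only [LinearEquiv.conj_apply, LinearMap.comp_apply, LinearEquiv.coe_coe,
      LinearEquiv.symm_apply_apply, Module.Dual.transpose_apply]
    show h (g t) s = h t (f s)
    rw [hf, hg]
    exact H.symm hsymm t s
  rw [← LinearMap.trace_conj' g e, this, LinearMap.trace_transpose']

lemma Adj.prod {n : ℕ} (f g : Fin n → Module.End ℝ E) (H : ∀ i, Adj h (f i) (g i)) :
    Adj h (List.ofFn f).prod (List.ofFn (fun i => g i.rev)).prod := by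
  induction n with
  | zero => intro s t; simp
  | succ n ih =>
    rw [List.ofFn_succ, List.prod_cons, List.ofFn_succ', List.concat_eq_append, List.prod_append]
    simp only [List.prod_singleton, Fin.rev_last, Fin.rev_castSucc]
    exact (H 0).mul (ih (fun i => f i.succ) (fun i => g i.succ) (fun i => H _))

lemma Adj.smul_sum {ι : Type*} (s : Finset ι) (c : ℝ) (z : ι → ℤ) (A B : ι → Module.End ℝ E)
    (H : ∀ i, Adj h (A i) (B i)) :
    Adj h (c • ∑ i ∈ s, z i • A i) (c • ∑ i ∈ s, z i • B i) := by
  intro x y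
  have := fun i => H i x y
  simp [LinearMap.sum_apply, LinearMap.map_smul_of_tower, this]

lemma prod_neg {n : ℕ} (f : Fin n → Module.End ℝ E) :
    (List.ofFn (fun i => - f i)).prod = (-1 : ℤ) ^ n • (List.ofFn f).prod := by
  induction n with
  | zero => simp
  | succ n ih =>
    rw [List.ofFn_succ, List.prod_cons, ih, List.ofFn_succ, List.prod_cons, pow_succ,
      mul_smul_comm, mul_smul, neg_mul, neg_smul, one_smul, smul_neg]

lemma P_cl {L : Type*} {n : ℕ} (R : (Fin 2 → L) → Module.End ℝ E) (hR : ∀ v, CL C (R v)) (a) :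
    CL C (P R n a) := by
  unfold P
  induction n with
  | zero => exact ⟨1, by simp; rfl⟩
  | succ n ih =>
    rw [List.ofFn_succ, List.prod_cons]
    exact (hR _).mul (ih (fun x => a (x.1.succ, x.2)))

lemma CL.neg {A : Module.End ℝ E} (hA : CL C A) : CL C (-A) := by
  obtain ⟨f, hf⟩ := hA
  exact ⟨-f, by funext x; simp [hf]⟩

lemma main_tr {L : Type*} [Module.Finite C E] [Module.Free C E]
    (hsymm : ∀ s t : E, h s t = h t s) (hnd : Function.Bijective (⇑h)) (n : ℕ)
    (l l' : L → Module.End ℝ E) (R R' : (Fin 2 → L) → Module.End ℝ E)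
    (hl : ∀ v, Adj h (l v) (- l' v)) (hR : ∀ v, Adj h (R v) (- R' v)) (a : Fin (1 + 2 * n) → L) :
    trR C (wedge (fun v : Fin 1 → L => l' (v 0)) (wpow R' n) a) = (-1 : ℤ) ^ (n + 1) •
      trR C (wedge (fun v : Fin 1 → L => l (v 0)) (wpow R n) a) := by
  obtain ⟨c, hc⟩ := cs_eq (L := L) (E := E) n
  rw [hc, hc]
  have cl' : ∀ v, CL C (l' v) := fun v => by simpa using (((hl v).symm hsymm).cl hnd).neg
  have cR' : ∀ v, CL C (R' v) := fun v => by simpa using (((hR v).symm hsymm).cl hnd).neg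
  have cl : ∀ v, CL C (l v) := fun v => (hl v).cl hnd
  have cR : ∀ v, CL C (R v) := fun v => (hR v).cl hnd
  rw [trR_smul_sum _ _ _ _ (fun τ => (cl' _).mul (P_cl R' cR' _)),
    trR_smul_sum _ _ _ _ (fun τ => (cl _).mul (P_cl R cR _)),
    smul_comm ((-1 : ℤ) ^ (n + 1)) c]
  congr 1
  rw [Finset.smul_sum]
  symm
  refine Fintype.sum_equiv (Equiv.mulRight (extPerm 1 (blockRev n))) _ _ ?_
  intro τ
  simp only [Equiv.coe_mulRight, Equiv.Perm.mul_apply, extPerm_castAdd, extPerm_natAdd,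
      Equiv.Perm.sign_mul, sign_extPerm, sign_blockRev, mul_one, blockRev_pos]
  rw [smul_comm]
  congr 1
  have hadj := (hl (a (τ (Fin.castAdd (2 * n) 0)))).mul
    (Adj.prod (h := h) (fun i => R (fun j => a (τ (Fin.natAdd 1 (pos (i, j))))))
      (fun i => - R' (fun j => a (τ (Fin.natAdd 1 (pos (i, j)))))) (fun i => hR _))
  have h2 := hadj.tr hsymm hnd
  rw [prod_neg] at h2
  have e1 : (P R n fun x => a (τ (Fin.natAdd 1 (pos x)))) =
    (List.ofFn (fun i => R (fun j => a (τ (Fin.natAdd 1 (pos (i, j))))))).prod := rfl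
  rw [e1, h2]
  have c2 := P_cl (C := C) (n := n) R' cR' (fun x => a (τ (Fin.natAdd 1 (pos (x.1.rev, x.2)))))
  rw [trR_mul_comm (cl' _) c2]
  have h3 := trR_smul_sum (C := C) {()} 1 (fun _ => (-1 : ℤ) ^ (n + 1))
    (fun _ : Unit => (P R' n fun x => a (τ (Fin.natAdd 1 (pos (x.1.rev, x.2))))) *
      l' (a (τ (Fin.castAdd (2 * n) 0)))) (fun _ => c2.mul (cl' _))
  simp only [Finset.sum_singleton, one_smul] at h3
  have h4 : ((-1 : ℤ) ^ n • (List.ofFn fun i : Fin n =>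
        R' fun j => a (τ (Fin.natAdd 1 (pos (i.rev, j))))).prod) *
      -l' (a (τ (Fin.castAdd (2 * n) 0))) = (-1 : ℤ) ^ (n + 1) •
      ((P R' n fun x => a (τ (Fin.natAdd 1 (pos (x.1.rev, x.2))))) *
      l' (a (τ (Fin.castAdd (2 * n) 0)))) := by
    rw [pow_succ]
    simp [P, mul_assoc]
  rw [h4, h3, smul_smul, ← mul_pow]
  simp

end traces

section integral
variable {C : Type*} [CommRing C] [Algebra ℝ C]

lemma poly_zero (P : Polynomial C) (hP : ∀ t : ℝ, P.eval (algebraMap ℝ C t) = 0) : P = 0 := by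
  ext k
  rw [Polynomial.coeff_zero]
  rw [← Module.forall_dual_apply_eq_zero_iff ℝ]
  intro φ
  let Q : Polynomial ℝ := ∑ i ∈ Finset.range (P.natDegree + 1),
    Polynomial.monomial i (φ (P.coeff i))
  have hQ : Q = 0 := by
    apply Polynomial.funext
    intro t
    have := congrArg φ (hP t)
    rw [Polynomial.eval_eq_sum_range, map_sum, map_zero] at this
    simp only [Q, Polynomial.eval_finsetSum, Polynomial.eval_monomial, Polynomial.eval_zero]
    rw [← this]
    refine Finset.sum_congr rfl fun i _ => ?_
    rw [← map_pow, mul_comm (P.coeff i), ← Algebra.smul_def, map_smul, smul_eq_mul, mul_comm]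
  have hk := congrArg (fun q => Polynomial.coeff q k) hQ
  simp only [Q, Polynomial.finsetSum_coeff, Polynomial.coeff_monomial, Polynomial.coeff_zero,
    Finset.sum_ite_eq', Finset.mem_range] at hk
  by_cases hlt : k < P.natDegree + 1
  · simpa [hlt] using hk
  · rw [Polynomial.coeff_eq_zero_of_natDegree_lt (by omega), map_zero]

lemma intPolyTo_eq (s : ℝ) (f : ℝ → C) (P : Polynomial C)
    (hP : ∀ t : ℝ, f t = P.eval (algebraMap ℝ C t)) :
    intPolyTo s f = ∑ k ∈ Finset.range (P.natDegree + 1), (s ^ (k + 1) / ((k : ℝ) + 1)) • P.coeff k := by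
  have hh : ∃ P : Polynomial C, ∀ t : ℝ, f t = Polynomial.eval (algebraMap ℝ C t) P := ⟨P, hP⟩
  unfold intPolyTo
  rw [dif_pos hh]
  have : hh.choose = P := by
    rw [← sub_eq_zero]
    apply poly_zero
    intro t
    rw [Polynomial.eval_sub, ← hh.choose_spec t, hP, sub_self]
  rw [this]

lemma intPolyTo_neg (s : ℝ) (f : ℝ → C) : intPolyTo s (fun t => - f t) = - intPolyTo s f := by
  by_cases hh : ∃ P : Polynomial C, ∀ t : ℝ, f t = Polynomial.eval (algebraMap ℝ C t) P
  · obtain ⟨P, hP⟩ := hh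
    rw [intPolyTo_eq s f P hP, intPolyTo_eq s _ (-P) (fun t => by simp [hP])]
    simp
  · have hh' : ¬ ∃ P : Polynomial C, ∀ t : ℝ, - f t = Polynomial.eval (algebraMap ℝ C t) P := by
      rintro ⟨P, hP⟩
      exact hh ⟨-P, fun t => by rw [Polynomial.eval_neg, ← hP, neg_neg]⟩
    unfold intPolyTo
    rw [dif_neg hh, dif_neg hh', neg_zero]

lemma intPolyTo_sign (s : ℝ) (f : ℝ → C) (n : ℕ) :
    intPolyTo s (fun t => (-1 : ℤ) ^ n • f t) = (-1 : ℤ) ^ n • intPolyTo s f := by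
  rcases Nat.even_or_odd n with hn | hn
  · simp [hn.neg_one_pow]
  · simp [hn.neg_one_pow, intPolyTo_neg]

end integral

lemma curv_adj {L C E : Type*} [LieRing L] [LieAlgebra ℝ L] [CommRing C] [Algebra ℝ C]
    [AddCommGroup E] [Module ℝ E] [Module C E]
    (ρ : L →ₗ[ℝ] Derivation ℝ C C)
    (hρ : ∀ (a b : L) (f : C), ρ ⁅a, b⁆ f = ρ a (ρ b f) - ρ b (ρ a f))
    (h : E →ₗ[C] E →ₗ[C] C) (D D' : L →ₗ[ℝ] Module.End ℝ E)
    (hadj : ∀ (a : L) (s t : E), ρ a (h s t) = h (D a s) t + h s (D' a t)) (v : Fin 2 → L) :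
    Adj h (curv2 D v) (- curv2 D' v) := by
  intro s t
  have key : ∀ a b, h (D a (D b s)) t = ρ a (ρ b (h s t)) - ρ a (h s (D' b t))
      - ρ b (h s (D' a t)) + h s (D' b (D' a t)) := by
    intro a b
    rw [hadj b s t, map_add, hadj a (D b s) t, hadj b s (D' a t)]
    ring
  have k1 := key (v 0) (v 1)
  have k2 := key (v 1) (v 0)
  have k3 := hadj ⁅v 0, v 1⁆ s t
  rw [hρ] at k3
  simp only [curv2, curv, LinearMap.sub_apply, LinearMap.neg_apply, Module.End.mul_apply, map_sub,
    map_neg]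
  rw [k1, k2]
  linear_combination k3

end CSAux


/-- `cs_p(∇⁰ʰ, ∇¹ʰ) = (−1)^p · cs_p(∇⁰, ∇¹)`. -/
theorem stmt13 {L : Type*} {C : Type*} {E : Type*}
    [LieRing L] [LieAlgebra ℝ L] [CommRing C] [Algebra ℝ C] [Module C L]
    [AddCommGroup E] [Module ℝ E] [Module C E] [IsScalarTower ℝ C E]
    [Module.Finite C E] [Module.Free C E]
    (ρ : L →ₗ[ℝ] Derivation ℝ C C)
    (hρ : ∀ (a b : L) (f : C), ρ ⁅a, b⁆ f = ρ a (ρ b f) - ρ b (ρ a f))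
    (hLeib : ∀ (a b : L) (f : C), ⁅a, f • b⁆ = f • ⁅a, b⁆ + ρ a f • b)
    (h : E →ₗ[C] E →ₗ[C] C) (hsymm : ∀ s t : E, h s t = h t s)
    (hnd : Function.Bijective (⇑h))
    (D0 D1 D0h D1h : L →ₗ[ℝ] Module.End ℝ E)
    (h0 : IsConn ρ D0) (h1 : IsConn ρ D1) (h0h : IsConn ρ D0h) (h1h : IsConn ρ D1h)
    (hadj0 : ∀ (a : L) (s t : E), ρ a (h s t) = h (D0 a s) t + h s (D0h a t))
    (hadj1 : ∀ (a : L) (s t : E), ρ a (h s t) = h (D1 a s) t + h s (D1h a t))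
    (p : ℕ) (hp : 1 ≤ p) :
    ∀ v : Fin (2 * (p - 1) + 1) → L,
      csPair C D0h D1h p v = (-1 : ℤ) ^ p • csPair C D0 D1 p v := by
  intro v
  obtain ⟨n, rfl⟩ : ∃ n, p = n + 1 := ⟨p - 1, by omega⟩
  unfold csPair
  rw [smul_comm, ← CSAux.intPolyTo_sign]
  congr 2
  funext t
  refine CSAux.main_tr hsymm hnd (n + 1 - 1) (fun x => (D1 - D0) x) (fun x => (D1h - D0h) x) _ _ ?_ ?_ _
  · intro a x y
    have e0 := hadj0 a x y
    have e1 := hadj1 a x y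
    simp only [LinearMap.sub_apply, LinearMap.neg_apply, map_sub, map_neg]
    linear_combination e0 - e1
  · refine CSAux.curv_adj ρ hρ h _ _ ?_
    intro a x y
    have e0 := hadj0 a x y
    have e1 := hadj1 a x y
    simp only [LinearMap.sub_apply, LinearMap.add_apply, LinearMap.smul_apply, map_sub, map_add,
      LinearMap.map_smul_of_tower]
    simp only [Algebra.smul_def]
    linear_combination (1 - algebraMap ℝ C t) * e0 + algebraMap ℝ C t * e1
end

section
/- If ∇ is a flat ℝ-linear connection of L on E, then for every p ≥ 1 the Chern–Simons form cs_p(∇, ∇^h) is closed: d_ρ(cs_p(∇, ∇^h)) = 0. (Its cohomology class u_{2p−1} = [cs_p(∇,∇^h)] is the secondary characteristic class of ∇.) -/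
open Module

section Comb

open Equiv

/-- Extend a permutation of `Fin n` to `Fin (n+1)` fixing `0`. -/
def extPerm {n : ℕ} (σ : Perm (Fin n)) : Perm (Fin (n + 1)) :=
  Equiv.Perm.decomposeFin.symm (0, σ)

lemma extPerm_zero {n : ℕ} (σ : Perm (Fin n)) : extPerm σ 0 = 0 := by
  simp [extPerm]

lemma extPerm_succ {n : ℕ} (σ : Perm (Fin n)) (k : Fin n) :
    extPerm σ k.succ = (σ k).succ := by
  simp [extPerm]

lemma sign_extPerm {n : ℕ} (σ : Perm (Fin n)) : Perm.sign (extPerm σ) = Perm.sign σ := by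
  simp [extPerm]

lemma perm_sum {n : ℕ} {V : Type*} [AddCommGroup V] (g : Perm (Fin (n + 1)) → V) :
    ∑ τ, g τ = ∑ i : Fin (n + 1), ∑ σ : Perm (Fin n), g (i.cycleRange.symm * extPerm σ) := by
  rw [← Fintype.sum_prod_type']
  symm
  refine Function.Bijective.sum_comp (e := fun x : Fin (n + 1) × Perm (Fin n) =>
    ((x.1.cycleRange.symm * extPerm x.2 : Perm (Fin (n + 1))))) ?_ g
  rw [Fintype.bijective_iff_injective_and_card]
  constructor
  · rintro ⟨i, σ⟩ ⟨j, σ'⟩ h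
    have h' : i.cycleRange.symm * extPerm σ = j.cycleRange.symm * extPerm σ' := h
    have h0 := congrArg (fun e : Perm (Fin (n + 1)) => e 0) h'
    simp [Perm.mul_apply, extPerm_zero, Fin.cycleRange_symm_zero] at h0
    subst h0
    have := mul_left_cancel h'
    have := Equiv.Perm.decomposeFin.symm.injective this
    simpa using this
  · simp [Fintype.card_perm, Nat.factorial_succ]

/-- Antisymmetrization. -/
def altS {X V : Type*} [AddCommGroup V] {n : ℕ} (f : (Fin n → X) → V) (a : Fin n → X) : V :=
  ∑ τ : Perm (Fin n), (Perm.sign τ : ℤ) • f (fun i => a (τ i))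

variable {X V : Type*} [AddCommGroup V]

lemma alt_comp {n : ℕ} (f : (Fin n → X) → V) (σ : Perm (Fin n)) (a : Fin n → X) :
    altS (fun b => f (fun i => b (σ i))) a = (Perm.sign σ : ℤ) • altS f a := by
  unfold altS
  rw [Finset.smul_sum]
  refine Fintype.sum_equiv (Equiv.mulRight σ) _ _ fun τ => ?_
  simp only [Equiv.coe_mulRight, Perm.mul_apply, map_mul, Units.val_mul, smul_smul]
  congr 1
  rcases Int.units_eq_one_or (Perm.sign σ) with h | h <;> simp [h]

lemma alt_comp_arg {n : ℕ} (f : (Fin n → X) → V) (σ : Perm (Fin n)) (a : Fin n → X) :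
    altS f (fun i => a (σ i)) = (Perm.sign σ : ℤ) • altS f a := by
  unfold altS
  rw [Finset.smul_sum]
  refine Fintype.sum_equiv (Equiv.mulLeft σ) _ _ fun τ => ?_
  simp only [Equiv.coe_mulLeft, Perm.mul_apply, map_mul, Units.val_mul, smul_smul]
  congr 1
  rcases Int.units_eq_one_or (Perm.sign σ) with h | h <;> simp [h]

lemma alt_succ {n : ℕ} (f : (Fin (n + 1) → X) → V) (a : Fin (n + 1) → X) :
    altS f a = ∑ i : Fin (n + 1), (-1 : ℤ) ^ (i : ℕ) •
      altS (fun b => f (Fin.cons (a i) b)) (fun k => a (i.succAbove k)) := by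
  unfold altS
  rw [perm_sum]
  refine Finset.sum_congr rfl fun i _ => ?_
  rw [Finset.smul_sum]
  refine Finset.sum_congr rfl fun σ _ => ?_
  rw [smul_smul]
  congr 1
  · simp [sign_extPerm, Perm.sign_symm, Fin.sign_cycleRange]
  · congr 1
    funext k
    refine Fin.cases ?_ (fun k => ?_) k
    · simp [extPerm_zero]
    · simp [extPerm_succ]

lemma alt_map {W : Type*} [AddCommGroup W] {n : ℕ} (φ : V →+ W) (f : (Fin n → X) → V)
    (a : Fin n → X) : φ (altS f a) = altS (fun b => φ (f b)) a := by
  simp [altS, map_sum, map_zsmul]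

lemma alt_add {n : ℕ} (f g : (Fin n → X) → V) (a : Fin n → X) :
    altS (fun b => f b + g b) a = altS f a + altS g a := by
  simp [altS, smul_add, Finset.sum_add_distrib]

lemma alt_neg {n : ℕ} (f : (Fin n → X) → V) (a : Fin n → X) :
    altS (fun b => - f b) a = - altS f a := by
  simp [altS]

lemma alt_sub {n : ℕ} (f g : (Fin n → X) → V) (a : Fin n → X) :
    altS (fun b => f b - g b) a = altS f a - altS g a := by
  simp [altS, smul_sub]

lemma alt_sum {n : ℕ} {ι : Type*} (s : Finset ι) (f : ι → (Fin n → X) → V) (a : Fin n → X) :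
    altS (fun b => ∑ k ∈ s, f k b) a = ∑ k ∈ s, altS (f k) a := by
  simp only [altS, Finset.smul_sum]
  rw [Finset.sum_comm]

/-- Ordered product. -/
def prodL {A : Type*} [Ring A] {n : ℕ} (x : Fin n → A) : A := (List.ofFn x).prod

variable {A C : Type*} [Ring A] [AddCommGroup C]

lemma prodL_succ {n : ℕ} (x : Fin (n + 1) → A) :
    prodL x = x 0 * prodL (fun i => x i.succ) := by
  simp [prodL, List.ofFn_succ]

lemma prodL_add {m n : ℕ} (x : Fin (m + n) → A) :
    prodL x = prodL (fun i => x (Fin.castAdd n i)) * prodL (fun i => x (Fin.natAdd m i)) := by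
  simp [prodL, List.ofFn_add]
  rfl

lemma tr_rot {n : ℕ} (tr : A →+ C) (htr : ∀ x y, tr (x * y) = tr (y * x)) (x : Fin (n + 1) → A) :
    tr (prodL (fun i => x (finRotate (n + 1) i))) = tr (prodL x) := by
  rw [prodL_succ x, htr]
  congr 1
  simp only [prodL]
  rw [List.ofFn_succ']
  simp

lemma exists_rot {m : ℕ} (hm : Even m) (tr : A →+ C) (htr : ∀ x y, tr (x * y) = tr (y * x))
    (k : Fin (m + 1)) : ∃ σ : Perm (Fin (m + 1)), σ 0 = k ∧ Perm.sign σ = 1 ∧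
      ∀ x : Fin (m + 1) → A, tr (prodL (fun i => x (σ i))) = tr (prodL x) := by
  induction k using Fin.induction with
  | zero => exact ⟨1, by simp, by simp, fun x => rfl⟩
  | succ k ih =>
    obtain ⟨σ, h0, h1, h2⟩ := ih
    refine ⟨finRotate (m + 1) * σ, ?_, ?_, fun x => ?_⟩
    · simp [h0]
    · simp [h1, hm.neg_one_pow]
    · simp only [Perm.mul_apply]
      rw [h2 (fun i => x (finRotate (m + 1) i)), tr_rot tr htr]

lemma alt_tr_even {m : ℕ} (hm : Even m) (tr : A →+ C) (htr : ∀ x y, tr (x * y) = tr (y * x))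
    (Λ : X → A) (a : Fin (m + 2) → X) :
    altS (fun b : Fin (m + 2) → X => tr (prodL (fun i => Λ (b i)))) a +
      altS (fun b : Fin (m + 2) → X => tr (prodL (fun i => Λ (b i)))) a = 0 := by
  have h := alt_comp (fun b : Fin (m + 2) → X => tr (prodL (fun i => Λ (b i))))
    (finRotate (m + 2)) a
  have h2 : ∀ b : Fin (m + 2) → X, tr (prodL (fun i => Λ (b (finRotate (m + 2) i)))) =
      tr (prodL (fun i => Λ (b i))) := fun b => tr_rot tr htr (fun i => Λ (b i))
  simp only [h2] at h
  have h3 : Perm.sign (finRotate (m + 2)) = -1 := by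
    simp [pow_succ, hm.neg_one_pow]
  rw [h3] at h
  simp only [Units.val_neg, Units.val_one, neg_smul, one_smul] at h
  nth_rewrite 1 [h]
  simp

lemma alt_tr_odd {m : ℕ} (hm : Even m) (tr : A →+ C) (htr : ∀ x y, tr (x * y) = tr (y * x))
    (Λ : X → A) (v : Fin (m + 1) → X) :
    altS (fun b : Fin (m + 1) → X => tr (prodL (fun i => Λ (b i)))) v =
      (m + 1) • altS (fun b : Fin m → X => tr (Λ (v 0) * prodL (fun i => Λ (b i))))
        (fun k => v k.succ) := by
  set g : Perm (Fin (m + 1)) → C :=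
    fun τ => (Perm.sign τ : ℤ) • tr (prodL (fun i => Λ (v (τ i)))) with hg
  have e1 : ∀ τ, g τ = ∑ k, if τ k = 0 then g τ else 0 := by
    intro τ
    rw [Finset.sum_eq_single (τ.symm 0)]
    · simp
    · intro b _ hb
      rw [if_neg]
      intro hh
      exact hb (by rw [← hh]; simp)
    · simp
  have e2 : ∀ k, (∑ τ, if τ k = 0 then g τ else 0) = ∑ τ, if τ 0 = 0 then g τ else 0 := by
    intro k
    obtain ⟨σ, h0, h1, h2⟩ := exists_rot hm tr htr k
    refine Fintype.sum_equiv (Equiv.mulRight σ) _ _ fun τ => ?_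
    have : g (τ * σ) = g τ := by
      simp only [hg, Perm.mul_apply, map_mul, h1, mul_one]
      rw [h2 (fun i => Λ (v (τ i)))]
    simp [h0, this]
  have e3 : (∑ τ, if τ 0 = 0 then g τ else 0) =
      altS (fun b : Fin m → X => tr (Λ (v 0) * prodL (fun i => Λ (b i))))
        (fun k => v k.succ) := by
    rw [perm_sum, Finset.sum_eq_single 0]
    · unfold altS
      refine Finset.sum_congr rfl fun σ _ => ?_
      have hz : (Fin.cycleRange (0 : Fin (m + 1))).symm = 1 := by
        simp; rfl
      rw [hz, one_mul, if_pos (extPerm_zero σ)]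
      simp only [hg, sign_extPerm]
      rw [prodL_succ]
      simp [extPerm_succ, extPerm_zero]
    · intro i _ hi
      refine Finset.sum_eq_zero fun σ _ => ?_
      rw [if_neg]
      simp [extPerm_zero, hi]
    · simp
  unfold altS
  change ∑ τ, g τ = _
  rw [Finset.sum_congr rfl fun τ _ => e1 τ, Finset.sum_comm, Finset.sum_congr rfl fun k _ => e2 k,
    Finset.sum_const, e3]
  simp [altS]

lemma prodL_deriv (d : A →+ A) (hd : ∀ x y, d (x * y) = d x * y + x * d y) {n : ℕ}
    (x : Fin n → A) : d (prodL x) = ∑ k, prodL (Function.update x k (d (x k))) := by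
  induction n with
  | zero =>
    have := hd 1 1
    simp at this
    simp [prodL, this]
  | succ n ih =>
    rw [prodL_succ, hd, ih, Fin.sum_univ_succ]
    congr 1
    · rw [prodL_succ]; simp
    · rw [Finset.mul_sum]
      refine Finset.sum_congr rfl fun k _ => ?_
      rw [prodL_succ]
      congr 1
      congr 1
      funext i
      by_cases h : i = k
      · subst h; simp
      · simp [Function.update_of_ne h, Function.update_of_ne (fun hh => h (Fin.succ_injective _ hh))]

end Comb

section Core

open Equiv

variable {L A C : Type*} [LieRing L] [Ring A] [AddCommGroup C]

lemma core_first {m : ℕ} (hm : Even m) (tr : A →+ C) (htr : ∀ x y, tr (x * y) = tr (y * x))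
    (Λ : L →+ A) (δ : L → A →+ A) (hδ : ∀ a x y, δ a (x * y) = δ a x * y + x * δ a y)
    (act : L → C →+ C) (hact : ∀ a x, act a (tr x) = tr (δ a x)) (a : Fin (m + 2) → L) :
    ∑ i : Fin (m + 2), (-1 : ℤ) ^ (i : ℕ) • act (a i)
      (tr (altS (fun b : Fin (m + 1) → L => prodL fun j => Λ (b j))
        (fun k => a (i.succAbove k)))) =
    (m + 1) • altS (fun b : Fin (m + 2) → L =>
      tr (δ (b 0) (Λ (b 1)) * prodL fun j : Fin m => Λ (b j.succ.succ))) a := by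
  set G : Fin (m + 1) → (Fin (m + 2) → L) → C := fun k b =>
    tr (prodL (Function.update (fun j : Fin (m + 1) => Λ (b j.succ)) k
      (δ (b 0) (Λ (b k.succ))))) with hG
  have h1 : ∀ k, altS (G k) a = altS (G 0) a := by
    intro k
    obtain ⟨σ, h0, h1, h2⟩ := exists_rot hm tr htr k
    have h3 : (fun b => G 0 (fun i => b (extPerm σ i))) = G k := by
      funext b
      simp only [hG]
      rw [← h2 (Function.update (fun j : Fin (m + 1) => Λ (b j.succ)) k _)]
      congr 2
      funext i
      by_cases hi : i = 0
      · subst hi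
        simp only [Function.update_self, extPerm_succ, extPerm_zero, h0]
      · have : σ i ≠ k := by
          rw [← h0]; exact fun h => hi (σ.injective h)
        simp [Function.update_of_ne hi, Function.update_of_ne this, extPerm_succ]
    rw [← h3, alt_comp, sign_extPerm, h1]
    simp
  have h4 : G 0 = (fun b : Fin (m + 2) → L =>
      tr (δ (b 0) (Λ (b 1)) * prodL fun j : Fin m => Λ (b j.succ.succ))) := by
    funext b
    simp only [hG]
    rw [prodL_succ]
    simp
  rw [← h4]
  have h5 : ∑ k, altS (G k) a = (m + 1) • altS (G 0) a := by
    rw [Finset.sum_congr rfl fun k _ => h1 k]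
    simp
  rw [← h5, ← alt_sum, alt_succ]
  refine Finset.sum_congr rfl fun i _ => ?_
  rw [hact, alt_map, alt_map]
  congr 2
  funext b
  rw [prodL_deriv (δ (a i)) (hδ (a i)), map_sum]
  simp [hG]

lemma succAbove_aux {m : ℕ} (i : Fin (m + 2)) (j : Fin (m + 1)) (k : Fin m) (h : (i : ℕ) ≤ j) :
    j.succ.succAbove ((⟨(i : ℕ), by omega⟩ : Fin (m + 1)).succAbove k) =
      i.succAbove (j.succAbove k) := by
  obtain ⟨i, hi⟩ := i
  obtain ⟨j, hj⟩ := j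
  obtain ⟨k, hk⟩ := k
  simp only at h
  have key : ∀ {n : ℕ} (p : Fin (n + 1)) (q : Fin n), ((p.succAbove q : Fin (n + 1)) : ℕ) =
      if (q : ℕ) < p then (q : ℕ) else q + 1 := by
    intro n p q
    simp only [Fin.succAbove, Fin.lt_def, Fin.val_castSucc]
    split_ifs <;> simp
  ext
  simp only [key, Fin.val_succ]
  split_ifs <;> omega

lemma core_second {m : ℕ} (hm : Even m) (tr : A →+ C) (htr : ∀ x y, tr (x * y) = tr (y * x))
    (Λ : L →+ A) (a : Fin (m + 2) → L) (ω : (Fin (m + 1) → L) → C)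
    (hω : ∀ v, ω v = tr (altS (fun b : Fin (m + 1) → L => prodL fun j => Λ (b j)) v))
    (T : C)
    (hT : T = ∑ i : Fin (m + 2), ∑ j : Fin (m + 2),
        if h : (i : ℕ) < (j : ℕ) then
          (-1 : ℤ) ^ ((i : ℕ) + (j : ℕ)) • ω (Fin.cons ⁅a i, a j⁆
            (fun k : Fin m => a (j.succAbove
              ((⟨(i : ℕ), by have := j.isLt; omega⟩ : Fin (m + 1)).succAbove k))))
        else 0) :
    T + T = - ((m + 1) • altS (fun b : Fin (m + 2) → L =>
      tr (Λ ⁅b 0, b 1⁆ * prodL fun j : Fin m => Λ (b j.succ.succ))) a) := by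
  set Q : Fin (m + 2) → Fin (m + 2) → C := fun i j =>
        if h : (i : ℕ) < (j : ℕ) then
          (-1 : ℤ) ^ ((i : ℕ) + (j : ℕ)) • ω (Fin.cons ⁅a i, a j⁆
            (fun k : Fin m => a (j.succAbove
              ((⟨(i : ℕ), by have := j.isLt; omega⟩ : Fin (m + 1)).succAbove k))))
        else 0 with hQ
  have hω' : ∀ (x : L) (c : Fin m → L), ω (Fin.cons x c) =
      (m + 1) • altS (fun b : Fin m → L => tr (Λ x * prodL (fun i => Λ (b i)))) c := by
    intro x c
    rw [hω, alt_map, alt_tr_odd hm tr htr]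
    simp
  have hωneg : ∀ (x : L) (c : Fin m → L), ω (Fin.cons (-x) c) = - ω (Fin.cons x c) := by
    intro x c
    rw [hω', hω']
    simp only [map_neg, neg_mul, alt_neg, smul_neg]
  have e1 : T + T = ∑ i, ∑ j, (Q i j + Q j i) := by
    simp only [Finset.sum_add_distrib]
    rw [Finset.sum_comm (f := fun i j => Q j i), hT]
  have e2 : ∀ i, ∑ j, (Q i j + Q j i) =
      ∑ j' : Fin (m + 1), (Q i (i.succAbove j') + Q (i.succAbove j') i) := by
    intro i
    rw [Fin.sum_univ_succAbove _ i]
    simp [hQ]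
  have e3 : ∀ i (j' : Fin (m + 1)), Q i (i.succAbove j') + Q (i.succAbove j') i =
      - ((-1 : ℤ) ^ (i : ℕ) • (-1 : ℤ) ^ (j' : ℕ) •
        ω (Fin.cons ⁅a i, a (i.succAbove j')⁆ (fun k => a (i.succAbove (j'.succAbove k))))) := by
    intro i j'
    by_cases h : (j' : ℕ) < (i : ℕ)
    · have hs : i.succAbove j' = j'.castSucc := Fin.succAbove_of_castSucc_lt _ _ h
      simp only [hQ, hs, Fin.val_castSucc]
      rw [dif_neg (by omega), dif_pos h, zero_add, ← lie_skew, hωneg, smul_neg, pow_add, smul_smul,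
        mul_comm]
    · have h' : (i : ℕ) ≤ j' := by omega
      have hs : i.succAbove j' = j'.succ := Fin.succAbove_of_le_castSucc _ _ h'
      simp only [hQ, hs, Fin.val_succ]
      rw [dif_pos (by omega), dif_neg (by omega), add_zero, smul_smul, ← neg_smul]
      congr 1
      · rw [pow_add, pow_succ]; ring
      · congr 2
        funext k
        congr 1
        exact succAbove_aux i j' k h'
  rw [e1, Finset.sum_congr rfl fun i _ => e2 i]
  simp only [e3]
  rw [alt_succ]
  simp only [Finset.sum_neg_distrib, neg_inj]
  rw [Finset.smul_sum]
  refine Finset.sum_congr rfl fun i _ => ?_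
  rw [alt_succ, ← Finset.smul_sum, smul_comm]
  congr 1
  rw [Finset.smul_sum]
  refine Finset.sum_congr rfl fun j _ => ?_
  rw [hω', smul_comm]
  congr 2

theorem core {m : ℕ} (hm : Even m) (tr : A →+ C) (htr : ∀ x y, tr (x * y) = tr (y * x))
    (Λ : L →+ A) (δ : L → A →+ A) (hδ : ∀ a x y, δ a (x * y) = δ a x * y + x * δ a y)
    (act : L → C →+ C) (hact : ∀ a x, act a (tr x) = tr (δ a x))
    (hflat : ∀ a b, Λ ⁅a, b⁆ = δ a (Λ b) - δ b (Λ a) + (Λ a * Λ b - Λ b * Λ a))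
    (ω : (Fin (m + 1) → L) → C)
    (hω : ∀ v, ω v = tr (altS (fun b : Fin (m + 1) → L => prodL fun j => Λ (b j)) v))
    (a : Fin (m + 2) → L) :
    dGen (fun a c => act a c) ω a + dGen (fun a c => act a c) ω a = 0 := by
  simp only [dGen]
  generalize hT : (∑ i : Fin (m + 2), ∑ j : Fin (m + 2),
        if h : (i : ℕ) < (j : ℕ) then
          (-1 : ℤ) ^ ((i : ℕ) + (j : ℕ)) • ω (Fin.cons ⁅a i, a j⁆
            (fun k : Fin m => a (j.succAbove
              ((⟨(i : ℕ), by have := j.isLt; omega⟩ : Fin (m + 1)).succAbove k))))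
        else 0) = T
  have h2 := core_second hm tr htr Λ a ω hω T hT.symm
  have h1 := core_first hm tr htr Λ δ hδ act hact a
  simp only [← hω] at h1
  rw [h1, add_add_add_comm, h2, ← smul_add, ← sub_eq_add_neg, ← smul_sub]
  convert smul_zero _
  set F : (Fin (m + 2) → L) → C := fun b =>
      tr (δ (b 0) (Λ (b 1)) * prodL fun j : Fin m => Λ (b j.succ.succ)) with hF
  set P : (Fin (m + 2) → L) → C := fun b => tr (prodL (fun i => Λ (b i))) with hP
  have sw0 : Equiv.swap (0 : Fin (m + 2)) 1 0 = 1 := by simp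
  have sw1 : Equiv.swap (0 : Fin (m + 2)) 1 1 = 0 := by simp
  have sws : ∀ j : Fin m, Equiv.swap (0 : Fin (m + 2)) 1 j.succ.succ = j.succ.succ := fun j =>
    Equiv.swap_apply_of_ne_of_ne (Fin.succ_ne_zero _)
      (fun h => Fin.succ_ne_zero j (Fin.succ_injective _ h))
  have ssw : Perm.sign (Equiv.swap (0 : Fin (m + 2)) 1) = -1 := Perm.sign_swap (by simp)
  have hFs := alt_comp F (Equiv.swap 0 1) a
  have hPs := alt_comp P (Equiv.swap 0 1) a
  rw [ssw] at hFs hPs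
  simp only [Units.val_neg, Units.val_one, neg_smul, one_smul] at hFs hPs
  have hPP : altS P a + altS P a = 0 := alt_tr_even hm tr htr (fun x => Λ x) a
  have key : (fun b : Fin (m + 2) → L =>
      tr (Λ ⁅b 0, b 1⁆ * prodL fun j : Fin m => Λ (b j.succ.succ))) =
      fun b => (F b - F (fun i => b (Equiv.swap 0 1 i))) +
        (P b - P (fun i => b (Equiv.swap 0 1 i))) := by
    funext b
    simp only [hF, hP, sw0, sw1, sws]
    rw [prodL_succ, prodL_succ (n := m), prodL_succ, prodL_succ (n := m)]
    simp only [Fin.succ_zero_eq_one, sw0, sw1, sws]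
    rw [hflat, ← map_sub, ← map_sub, ← map_add]
    congr 1
    noncomm_ring
  rw [key, alt_add, alt_sub, alt_sub, hFs, hPs]
  rw [sub_neg_eq_add, sub_neg_eq_add, hPP]
  abel

end Core

section Wedge

open Equiv

variable {L E : Type*} [AddCommGroup E] [Module ℝ E]

lemma wedge_smul {m n : ℕ} (r r' : ℝ) (ω : (Fin m → L) → Module.End ℝ E)
    (η : (Fin n → L) → Module.End ℝ E) (a : Fin (m + n) → L) :
    wedge (fun v => r • ω v) (fun v => r' • η v) a = (r * r') • wedge ω η a := by
  unfold wedge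
  rw [smul_comm (r * r'), Finset.smul_sum (r := r * r')]
  congr 1
  refine Finset.sum_congr rfl fun τ _ => ?_
  rw [smul_mul_smul_comm, smul_comm]

lemma wedge_alt {m n : ℕ} (f : (Fin m → L) → Module.End ℝ E)
    (g : (Fin n → L) → Module.End ℝ E) (a : Fin (m + n) → L) :
    wedge (altS f) (altS g) a =
      altS (fun b => f (fun i => b (Fin.castAdd n i)) * g (fun j => b (Fin.natAdd m j))) a := by
  set H : (Fin (m + n) → L) → Module.End ℝ E :=
    fun b => f (fun i => b (Fin.castAdd n i)) * g (fun j => b (Fin.natAdd m j)) with hH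
  have h1 : ∀ (σ : Perm (Fin m)) (σ' : Perm (Fin n)),
      ∑ τ : Perm (Fin (m + n)), (Perm.sign τ : ℤ) •
        (((Perm.sign σ : ℤ) • f (fun i => a (τ (Fin.castAdd n (σ i))))) *
          ((Perm.sign σ' : ℤ) • g (fun j => a (τ (Fin.natAdd m (σ' j)))))) = altS H a := by
    intro σ σ'
    have h2 := alt_comp H (finSumFinEquiv.permCongr (Equiv.Perm.sumCongr σ σ')) a
    rw [Perm.sign_permCongr, Perm.sign_sumCongr] at h2
    have h3 : (fun b : Fin (m + n) → L =>
        H (fun i => b (finSumFinEquiv.permCongr (Equiv.Perm.sumCongr σ σ') i))) =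
        fun b => f (fun i => b (Fin.castAdd n (σ i))) * g (fun j => b (Fin.natAdd m (σ' j))) := by
      funext b
      simp [hH, Equiv.permCongr_apply]
    rw [h3] at h2
    have h4 : ((Perm.sign σ * Perm.sign σ' : ℤˣ) : ℤ) • ((Perm.sign σ * Perm.sign σ' : ℤˣ) : ℤ) •
        altS H a = altS H a := by
      rw [smul_smul, ← Units.val_mul, Int.units_mul_self]; simp
    rw [← h4, ← h2, altS, Finset.smul_sum]
    refine Finset.sum_congr rfl fun τ _ => ?_
    rw [smul_mul_smul_comm, smul_comm]
    simp
  have h5 : ∑ τ : Perm (Fin (m + n)), (Perm.sign τ : ℤ) •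
      (altS f (fun i => a (τ (Fin.castAdd n i))) * altS g (fun j => a (τ (Fin.natAdd m j)))) =
      ((m.factorial * n.factorial : ℝ)) • altS H a := by
    conv_lhs => simp only [altS, Finset.sum_mul_sum, Finset.smul_sum]
    rw [Finset.sum_comm]
    have : ∀ σ : Perm (Fin m), ∑ τ : Perm (Fin (m + n)), ∑ σ' : Perm (Fin n),
      (Perm.sign τ : ℤ) •
        (((Perm.sign σ : ℤ) • f (fun i => a (τ (Fin.castAdd n (σ i))))) *
          ((Perm.sign σ' : ℤ) • g (fun j => a (τ (Fin.natAdd m (σ' j)))))) =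
          (n.factorial : ℝ) • altS H a := by
      intro σ
      rw [Finset.sum_comm, Finset.sum_congr rfl fun σ' _ => h1 σ σ']
      simp [Fintype.card_perm, Nat.cast_smul_eq_nsmul]
    rw [Finset.sum_congr rfl fun σ _ => this σ]
    rw [← Finset.smul_sum]
    simp [Fintype.card_perm, mul_smul, ← Nat.cast_smul_eq_nsmul ℝ]
    rw [smul_comm]
  unfold wedge
  rw [h5, smul_smul, inv_mul_cancel₀, one_smul]
  positivity

/-- antisymmetrized product of a one-form. -/
def SS (l : L → Module.End ℝ E) (n : ℕ) (a : Fin n → L) : Module.End ℝ E :=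
  altS (fun b : Fin n → L => prodL fun j => l (b j)) a

lemma SS_cast (l : L → Module.End ℝ E) {m n : ℕ} (h : n = m) (a : Fin m → L) :
    SS l n (fun i => a (Fin.cast h i)) = SS l m a := by
  subst h; rfl

lemma wedge_SS (l : L → Module.End ℝ E) {m n : ℕ} (a : Fin (m + n) → L) :
    wedge (SS l m) (SS l n) a = SS l (m + n) a := by
  have := wedge_alt (fun b : Fin m → L => prodL fun j => l (b j))
    (fun b : Fin n → L => prodL fun j => l (b j)) a
  refine this.trans ?_
  unfold SS
  congr 1
  funext b
  rw [prodL_add]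

lemma SS_one (l : L → Module.End ℝ E) (a : Fin 1 → L) : SS l 1 a = l (a 0) := by
  simp [SS, altS, prodL]

lemma SS_two (l : L → Module.End ℝ E) (a : Fin 2 → L) :
    SS l 2 a = l (a 0) * l (a 1) - l (a 1) * l (a 0) := by
  unfold SS
  rw [alt_succ]
  simp [Fin.sum_univ_two, altS, prodL, sub_eq_add_neg, Fin.succAbove]

lemma wpow_SS (l : L → Module.End ℝ E) (R : (Fin 2 → L) → Module.End ℝ E) (s : ℝ)
    (hR : ∀ v, R v = s • SS l 2 v) (q : ℕ) (a : Fin (2 * q) → L) :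
    wpow R q a = s ^ q • SS l (2 * q) a := by
  induction q with
  | zero => simp [wpow, SS, altS, prodL]
  | succ q ih =>
    have e1 : R = fun v => s • SS l 2 v := funext hR
    have e2 : wpow R q = fun v => s ^ q • SS l (2 * q) v := funext ih
    simp only [wpow]
    rw [e2, e1, wedge_smul, wedge_SS, SS_cast, pow_succ, mul_comm]

end Wedge

section Poly

open Polynomial

variable {C : Type*} [CommRing C] [Algebra ℝ C]

lemma poly_zero (P : Polynomial C)
    (h : ∀ t : ℝ, Polynomial.eval (algebraMap ℝ C t) P = 0) : P = 0 := by
  ext k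
  rw [coeff_zero, ← Module.forall_dual_apply_eq_zero_iff ℝ]
  intro φ
  set r : Polynomial ℝ := ∑ i ∈ Finset.range (P.natDegree + 1), monomial i (φ (P.coeff i)) with hr
  have hr0 : r = 0 := by
    apply Polynomial.funext
    intro t
    have h1 := congrArg φ (h t)
    rw [eval_eq_sum_range, map_sum, map_zero] at h1
    rw [eval_zero, ← h1, hr, eval_finsetSum]
    refine Finset.sum_congr rfl fun i _ => ?_
    rw [eval_monomial, ← map_pow, mul_comm (P.coeff i), ← Algebra.smul_def, map_smul, smul_eq_mul,
      mul_comm]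
  have hk : r.coeff k = φ (P.coeff k) := by
    rw [hr, finsetSum_coeff]
    simp only [coeff_monomial]
    rw [Finset.sum_ite_eq']
    split_ifs with hk
    · rfl
    · rw [coeff_eq_zero_of_natDegree_lt (by simpa using hk), map_zero]
  rw [← hk, hr0, coeff_zero]

lemma int_poly (r : Polynomial ℝ) : ∃ κ : ℝ, ∀ c : C,
    intPolyTo 1 (fun t => r.eval t • c) = κ • c := by
  refine ⟨∑ k ∈ Finset.range (r.natDegree + 1), (1 / ((k : ℝ) + 1)) * r.coeff k, fun c => ?_⟩
  set P' : Polynomial C := r.map (algebraMap ℝ C) * Polynomial.C c with hP'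
  have hev : ∀ t : ℝ, r.eval t • c = Polynomial.eval (algebraMap ℝ C t) P' := by
    intro t
    rw [hP', eval_mul, eval_C, eval_map, Algebra.smul_def, eval₂_at_apply]
  have hex : ∃ P : Polynomial C, ∀ t : ℝ, r.eval t • c = Polynomial.eval (algebraMap ℝ C t) P :=
    ⟨P', hev⟩
  unfold intPolyTo
  rw [dif_pos hex]
  have hch : hex.choose = P' := by
    rw [← sub_eq_zero]
    apply poly_zero
    intro t
    rw [eval_sub, ← hex.choose_spec t, ← hev t, sub_self]
  rw [hch]
  have hz : ∀ n : ℕ, ((1 : ℝ) ^ (n + 1) / ((n : ℝ) + 1)) • (0 : C) = 0 := fun n => smul_zero _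
  rw [← sum_over_range P' (f := fun k x => ((1 : ℝ) ^ (k + 1) / ((k : ℝ) + 1)) • x) hz,
    sum_over_range' P' hz (r.natDegree + 1), Finset.sum_smul]
  · refine Finset.sum_congr rfl fun k _ => ?_
    rw [hP', coeff_mul_C, coeff_map, ← Algebra.smul_def, smul_smul, one_pow]
  · refine Nat.lt_succ_of_le ?_
    refine (natDegree_mul_C_le _ _).trans ?_
    exact natDegree_map_le

end Poly

section Setup

set_option linter.unusedSectionVars false

variable {L C E : Type*} [LieRing L] [LieAlgebra ℝ L] [CommRing C] [Algebra ℝ C]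
    [AddCommGroup E] [Module ℝ E] [Module C E]

lemma dual_flat
    (ρ : L →ₗ[ℝ] Derivation ℝ C C)
    (hρ : ∀ (a b : L) (f : C), ρ ⁅a, b⁆ f = ρ a (ρ b f) - ρ b (ρ a f))
    (h : E →ₗ[C] E →ₗ[C] C) (hsymm : ∀ s t : E, h s t = h t s)
    (hnd : Function.Bijective (⇑h))
    (D Dh : L →ₗ[ℝ] Module.End ℝ E)
    (hadj : ∀ (a : L) (s t : E), ρ a (h s t) = h (D a s) t + h s (Dh a t))
    (hflat : ∀ a b : L, curv D a b = 0) (a b : L) : curv Dh a b = 0 := by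
  ext t
  rw [LinearMap.zero_apply]
  apply hnd.1
  rw [map_zero]
  ext s
  rw [hsymm, LinearMap.zero_apply]
  have h1 := hρ a b (h s t)
  have h2 : D ⁅a, b⁆ s = D a (D b s) - D b (D a s) := by
    have := congrArg (fun T : Module.End ℝ E => T s) (hflat a b)
    simp only [curv, LinearMap.sub_apply, LinearMap.zero_apply, Module.End.mul_apply] at this
    exact (sub_eq_zero.mp this).symm
  simp only [hadj, map_add, h2, map_sub, LinearMap.sub_apply] at h1
  simp only [curv, LinearMap.sub_apply, Module.End.mul_apply, map_sub]
  linear_combination -h1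

variable [IsScalarTower ℝ C E]

/-- Restriction of scalars as a ring homomorphism. -/
def iotaR : Module.End C E →+* Module.End ℝ E where
  toFun φ := φ.restrictScalars ℝ
  map_one' := rfl
  map_mul' _ _ := rfl
  map_zero' := rfl
  map_add' _ _ := rfl

lemma iotaR_injective : Function.Injective (iotaR (C := C) (E := E)) := by
  intro x y hxy
  ext e
  exact congrArg (fun T : Module.End ℝ E => T e) hxy

/-- The difference of two connections as a `C`-linear endomorphism valued form. -/
def lamC (ρ : L →ₗ[ℝ] Derivation ℝ C C) (D Dh : L →ₗ[ℝ] Module.End ℝ E) (hD : IsConn ρ D)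
    (hDh : IsConn ρ Dh) : L →+ Module.End C E where
  toFun a :=
    { toFun := fun e => (Dh - D) a e
      map_add' := fun x y => map_add _ x y
      map_smul' := fun f e => by
        simp only [LinearMap.sub_apply, hD a f e, hDh a f e, RingHom.id_apply, smul_sub]
        abel }
  map_zero' := by ext e; simp
  map_add' a b := by
    ext e
    change (Dh - D) (a + b) e = (Dh - D) a e + (Dh - D) b e
    rw [map_add]; rfl

/-- Commutator with a connection. -/
def dlt (d : Derivation ℝ C C) (T : Module.End ℝ E)
    (hT : ∀ (f : C) (e : E), T (f • e) = f • T e + d f • e) :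
    Module.End C E →+ Module.End C E where
  toFun φ :=
    { toFun := fun e => T (φ e) - φ (T e)
      map_add' := fun x y => by simp only [map_add]; abel
      map_smul' := fun f e => by
        simp only [map_smul, hT, map_add, RingHom.id_apply, smul_sub]
        abel }
  map_zero' := by ext e; simp
  map_add' a b := by
    ext e
    simp only [LinearMap.add_apply, map_add, LinearMap.coe_mk, AddHom.coe_mk]
    abel

lemma trR_iota (r : ℝ) (φ : Module.End C E) :
    trR C (r • iotaR φ) = r • LinearMap.trace C E φ := by
  have hex : ∃ g : E →ₗ[C] E, ⇑g = ⇑(r • iotaR φ : Module.End ℝ E) :=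
    ⟨algebraMap ℝ C r • φ, by
      funext e
      simp only [LinearMap.smul_apply, algebraMap_smul]
      rfl⟩
  unfold trR
  rw [dif_pos hex]
  have : hex.choose = algebraMap ℝ C r • φ := by
    ext e
    rw [hex.choose_spec]
    simp only [LinearMap.smul_apply, algebraMap_smul]
    rfl
  rw [this, map_smul, smul_eq_mul, Algebra.smul_def]

lemma trace_dlt [Module.Finite C E] [Module.Free C E] (d : Derivation ℝ C C) (T : Module.End ℝ E)
    (hT : ∀ (f : C) (e : E), T (f • e) = f • T e + d f • e) (φ : Module.End C E) :
    LinearMap.trace C E (dlt d T hT φ) = d (LinearMap.trace C E φ) := by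
  classical
  set b := Module.Free.chooseBasis C E with hb
  set Γ : Module.End C E := b.constr C (fun i => T (b i)) with hΓ
  have hΓb : ∀ i, Γ (b i) = T (b i) := fun i => by rw [hΓ, Module.Basis.constr_basis]
  have key : ∀ v j, b.repr (T v) j = d (b.repr v j) + b.repr (Γ v) j := by
    intro v j
    have h1 : T v = ∑ i, (b.repr v i • T (b i) + d (b.repr v i) • b i) := by
      conv_lhs => rw [← b.sum_repr v]
      rw [map_sum]
      exact Finset.sum_congr rfl fun i _ => hT _ _
    have h2 : Γ v = ∑ i, b.repr v i • T (b i) := by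
      conv_lhs => rw [← b.sum_repr v]
      rw [map_sum]
      exact Finset.sum_congr rfl fun i _ => by rw [map_smul, hΓb]
    rw [h1, Finset.sum_add_distrib, ← h2, map_add, Finsupp.add_apply, add_comm]
    congr 1
    rw [b.repr_sum_self]
  have htr : ∀ ψ : Module.End C E, LinearMap.trace C E ψ = ∑ i, b.repr (ψ (b i)) i := by
    intro ψ
    rw [LinearMap.trace_eq_matrix_trace C b ψ]
    simp [Matrix.trace, LinearMap.toMatrix_apply]
  have h3 : LinearMap.trace C E (Γ * φ) = LinearMap.trace C E (φ * Γ) :=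
    LinearMap.trace_mul_comm _ _ _
  rw [htr, htr] at h3
  rw [htr, htr, map_sum]
  have h4 : ∀ i, b.repr (dlt d T hT φ (b i)) i =
      d (b.repr (φ (b i)) i) + (b.repr ((Γ * φ) (b i)) i - b.repr ((φ * Γ) (b i)) i) := by
    intro i
    change b.repr (T (φ (b i)) - φ (T (b i))) i = _
    rw [map_sub, Finsupp.sub_apply, key, Module.End.mul_apply, Module.End.mul_apply, hΓb]
    ring
  rw [Finset.sum_congr rfl fun i _ => h4 i, Finset.sum_add_distrib, Finset.sum_sub_distrib, h3,
    sub_self, add_zero]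

end Setup

/-- for a flat ℝ-linear connection `∇` the Chern–Simons form
`cs_p(∇, ∇^h)` is closed. -/
theorem stmt14 {L : Type*} {C : Type*} {E : Type*}
    [LieRing L] [LieAlgebra ℝ L] [CommRing C] [Algebra ℝ C] [Module C L]
    [AddCommGroup E] [Module ℝ E] [Module C E] [IsScalarTower ℝ C E]
    [Module.Finite C E] [Module.Free C E]
    (ρ : L →ₗ[ℝ] Derivation ℝ C C)
    (hρ : ∀ (a b : L) (f : C), ρ ⁅a, b⁆ f = ρ a (ρ b f) - ρ b (ρ a f))
    (hLeib : ∀ (a b : L) (f : C), ⁅a, f • b⁆ = f • ⁅a, b⁆ + ρ a f • b)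
    (h : E →ₗ[C] E →ₗ[C] C) (hsymm : ∀ s t : E, h s t = h t s)
    (hnd : Function.Bijective (⇑h))
    (D Dh : L →ₗ[ℝ] Module.End ℝ E) (hD : IsConn ρ D) (hDh : IsConn ρ Dh)
    (hadj : ∀ (a : L) (s t : E), ρ a (h s t) = h (D a s) t + h s (Dh a t))
    (hflat : ∀ a b : L, curv D a b = 0)
    (p : ℕ) (hp : 1 ≤ p) :
    dRho ρ (csPair C D Dh p) = 0 := by
  classical
  have hFh : ∀ a b : L, curv Dh a b = 0 := dual_flat ρ hρ h hsymm hnd D Dh hadj hflat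
  set Λ : L →+ Module.End C E := lamC ρ D Dh hD hDh with hΛ
  set δ : L → Module.End C E →+ Module.End C E := fun a => dlt (ρ a) (D a) (hD a) with hδ
  have hι : ∀ a, (Dh - D) a = iotaR (Λ a) := fun a => rfl
  have hιδ : ∀ a φ, iotaR (δ a φ) = D a * iotaR φ - iotaR φ * D a := fun a φ => rfl
  have hrel : ∀ a b, Λ ⁅a, b⁆ = δ a (Λ b) - δ b (Λ a) + (Λ a * Λ b - Λ b * Λ a) := by
    intro a b
    apply iotaR_injective
    rw [map_add, map_sub, map_sub, map_mul, map_mul, hιδ, hιδ, ← hι, ← hι, ← hι]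
    have h1 := hFh a b
    have h2 := hflat a b
    simp only [curv, sub_eq_zero] at h1 h2
    simp only [LinearMap.sub_apply]
    rw [← h1, ← h2]
    noncomm_ring
  -- curvature along the path
  have hRt : ∀ (t : ℝ) (v : Fin 2 → L), curv2 (D + t • (Dh - D)) v =
      (t ^ 2 - t) • SS (fun a => (Dh - D) a) 2 v := by
    intro t v
    have h3 := congrArg (fun x => iotaR x) (hrel (v 0) (v 1))
    have h2 := hflat (v 0) (v 1)
    simp only [map_add, map_sub, map_mul, hιδ, ← hι] at h3
    simp only [curv, sub_eq_zero] at h2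
    rw [SS_two]
    simp only [curv2, curv]
    generalize Dh - D = l at h3 ⊢
    simp only [LinearMap.add_apply, LinearMap.smul_apply]
    rw [h3, ← h2]
    simp only [add_mul, mul_add, smul_mul_assoc, mul_smul_comm, smul_sub, smul_add, sub_smul,
      smul_smul, pow_two]
    abel
  have hint : ∀ a : Fin (2 * (p - 1) + 1) → L, ∀ t : ℝ,
      trR C (wedge (fun v : Fin 1 → L => (Dh - D) (v 0))
      (wpow (curv2 (D + t • (Dh - D))) (p - 1))
      (fun i => a (Fin.cast (by omega) i))) =
      ((Polynomial.X ^ 2 - Polynomial.X : Polynomial ℝ) ^ (p - 1)).eval t •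
        LinearMap.trace C E (altS (fun b : Fin (2 * (p - 1) + 1) → L => prodL fun j => Λ (b j)) a)
      := by
    intro a t
    have e1 : wpow (curv2 (D + t • (Dh - D))) (p - 1) =
        fun v => (t ^ 2 - t) ^ (p - 1) • SS (fun a => (Dh - D) a) (2 * (p - 1)) v :=
      funext fun v => wpow_SS _ _ _ (hRt t) _ v
    have e2 : (fun v : Fin 1 → L => (Dh - D) (v 0)) =
        fun v => (1 : ℝ) • SS (fun a => (Dh - D) a) 1 v := by
      funext v; rw [SS_one, one_smul]
    have e3 : SS (fun a => (Dh - D) a) (2 * (p - 1) + 1) a =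
        iotaR (altS (fun b : Fin (2 * (p - 1) + 1) → L => prodL fun j => Λ (b j)) a) := by
      have := alt_map (iotaR (C := C) (E := E)).toAddMonoidHom
        (fun b : Fin (2 * (p - 1) + 1) → L => prodL fun j => Λ (b j)) a
      refine Eq.trans ?_ this.symm
      unfold SS
      congr 1
      funext b
      simp only [hι, prodL, RingHom.toAddMonoidHom_eq_coe, AddMonoidHom.coe_coe, map_list_prod,
        List.map_ofFn]
      rfl
    rw [e1, e2, wedge_smul, wedge_SS, SS_cast, e3, one_mul, trR_iota]
    simp
  obtain ⟨κ, hκ⟩ := int_poly (C := C) ((Polynomial.X ^ 2 - Polynomial.X : Polynomial ℝ) ^ (p - 1))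
  set tr : Module.End C E →+ C :=
    (((p : ℝ) * κ) • ((LinearMap.trace C E).restrictScalars ℝ)).toAddMonoidHom with htr
  have htr' : ∀ x, tr x = ((p : ℝ) * κ) • LinearMap.trace C E x := fun x => rfl
  have hω : ∀ a, csPair C D Dh p a =
      tr (altS (fun b : Fin (2 * (p - 1) + 1) → L => prodL fun j => Λ (b j)) a) := by
    intro a
    rw [htr', mul_smul, ← hκ]
    unfold csPair
    simp only [hint]
  have hmain := core (m := 2 * (p - 1)) (even_two_mul _) tr
    (fun x y => by rw [htr', htr', LinearMap.trace_mul_comm]) Λ δ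
    (fun a x y => by
      apply iotaR_injective
      rw [map_add, hιδ, map_mul iotaR x y, map_mul iotaR (δ a x) y, map_mul iotaR x (δ a y),
        hιδ, hιδ]
      noncomm_ring)
    (fun a => (ρ a : C →ₗ[ℝ] C).toAddMonoidHom)
    (fun a x => by
      rw [htr', htr', hδ, trace_dlt]
      exact map_smul (ρ a : C →ₗ[ℝ] C) _ _)
    hrel (csPair C D Dh p) hω
  funext a
  have h2 : dRho ρ (csPair C D Dh p) a + dRho ρ (csPair C D Dh p) a = 0 := hmain a
  rw [← two_smul ℝ] at h2
  exact (smul_eq_zero_iff_right (two_ne_zero : (2 : ℝ) ≠ 0)).mp h2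
end
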